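/- arXiv:1406.6514 — 4 statements merged into one kernel-verified Lean document; each statement's English description precedes it below -/
import Mathlib

section
/- Let $Z$ be a $p$-dimensional Gaussian random vector with mean $0$ and covariance $\Sigma$ satisfying $\lambda_{\max}(\Sigma) \le M_0$ and $\max_j \sum_{i:|i-j|>k} |\sigma_{ij}| \le M k^{-\alpha}$ for all $k \ge 1$. Then for any even number $K_0 \ge 2$ there exists a constant $C$ (depending on $K_0, M_0, M$) such that $\sum_{1\le i_1,\dots,i_{K_0} \le p} \mathbb{E}\prod_{k=1}^{K_0}(z_{i_k}^2 - \sigma_{i_k i_k}) \le C p^{K_0/2}$. -/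
open MeasureTheory ProbabilityTheory Finset

noncomputable section

/-- `Z` is a centered Gaussian vector with covariance matrix `S`. -/
def IsGaussianVec {Ω : Type*} [MeasureSpace Ω] {p : ℕ}
    (Z : Ω → Fin p → ℝ) (S : Matrix (Fin p) (Fin p) ℝ) : Prop :=
  ∀ a : Fin p → ℝ,
    Measure.map (fun ω => ∑ i, a i * Z ω i) (ℙ : Measure Ω)
      = gaussianReal 0 (∑ i, ∑ j, a i * S i j * a j).toNNReal

open Real in
lemma chi_scalar (v : NNReal) (t : ℝ) (ht : |t| * v ≤ 1/4) :
    Integrable (fun x : ℝ => Real.exp (t * (x^2 - v))) (gaussianReal 0 v) ∧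
    ∫ x, Real.exp (t * (x^2 - v)) ∂(gaussianReal 0 v) ≤ Real.exp (4 * (t * v)^2) := by
  by_cases hv : v = 0
  · subst hv
    simp only [gaussianReal_zero_var]
    refine ⟨integrable_dirac (by simp), ?_⟩
    simp
  · have hv0 : (0:ℝ) < v := by positivity
    have htv : t * v ≤ 1/4 := le_trans (mul_le_mul_of_nonneg_right (le_abs_self t) hv0.le) ht
    set s : ℝ := t * v with hs
    set b : ℝ := (1 - 2 * s) / (2 * v) with hb
    have hb0 : 0 < b := by rw [hb]; apply div_pos <;> linarith
    have key : ∀ x : ℝ, gaussianPDFReal 0 v x * Real.exp (t * (x^2 - v))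
        = ((√(2 * π * v))⁻¹ * Real.exp (-s)) * Real.exp (-b * x^2) := by
      intro x
      rw [gaussianPDFReal, mul_assoc, mul_assoc (√(2 * π * v))⁻¹, ← Real.exp_add, ← Real.exp_add]
      congr 2
      rw [hb, hs]; field_simp; ring
    constructor
    · rw [gaussianReal_of_var_ne_zero _ hv,
        integrable_withDensity_iff_integrable_smul' (measurable_gaussianPDF _ _)
          (ae_of_all _ fun _ => gaussianPDF_lt_top)]
      simp only [toReal_gaussianPDF, smul_eq_mul, key]
      exact (integrable_exp_neg_mul_sq hb0).const_mul _
    · rw [integral_gaussianReal_eq_integral_smul hv]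
      simp only [smul_eq_mul, key]
      rw [integral_const_mul, integral_gaussian]
      have h1 : √(π / b) = √(2 * π * v) * √(1 / (1 - 2 * s)) := by
        rw [← Real.sqrt_mul (by positivity)]
        congr 1
        have : 1 - 2 * s ≠ 0 := by linarith
        rw [hb]; field_simp
      have h2 : √(1 / (1 - 2 * s)) ≤ Real.exp (s + 4 * s^2) := by
        rw [Real.sqrt_le_left (Real.exp_pos _).le, ← Real.exp_nat_mul]
        have h3 := Real.add_one_le_exp (2 * s + 8 * s^2)
        have h4 : ((2:ℕ):ℝ) * (s + 4 * s^2) = 2 * s + 8 * s^2 := by push_cast; ring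
        rw [h4]
        refine le_trans ?_ h3
        rw [div_le_iff₀ (by linarith)]
        nlinarith [mul_nonneg (sq_nonneg s) (by linarith : 0 ≤ 1 - 4 * s)]
      have h5 : √(2 * π * v) ≠ 0 := by positivity
      calc _ = Real.exp (-s) * √(1 / (1 - 2 * s)) := by
            rw [h1]; field_simp
        _ ≤ Real.exp (-s) * Real.exp (s + 4 * s^2) := by gcongr
        _ = _ := by rw [← Real.exp_add]; congr 1; ring

lemma diag_exists {p : ℕ} (S : Matrix (Fin p) (Fin p) ℝ) (hS : S.IsSymm) :
    ∃ (U : Matrix (Fin p) (Fin p) ℝ) (l : Fin p → ℝ),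
      U * U.transpose = 1 ∧ U.transpose * U = 1 ∧
        U.transpose * S * U = Matrix.diagonal l := by
  have hA : S.IsHermitian := by
    rw [Matrix.IsHermitian, Matrix.conjTranspose_eq_transpose_of_trivial]; exact hS
  refine ⟨hA.eigenvectorUnitary, hA.eigenvalues, ?_, ?_, ?_⟩
  · have := Unitary.mul_star_self_of_mem hA.eigenvectorUnitary.2
    rwa [Matrix.star_eq_conjTranspose, Matrix.conjTranspose_eq_transpose_of_trivial] at this
  · have := Unitary.star_mul_self_of_mem hA.eigenvectorUnitary.2
    rwa [Matrix.star_eq_conjTranspose, Matrix.conjTranspose_eq_transpose_of_trivial] at this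
  · have := hA.conjStarAlgAut_star_eigenvectorUnitary
    rw [Unitary.conjStarAlgAut_star_apply, Matrix.star_eq_conjTranspose,
      Matrix.conjTranspose_eq_transpose_of_trivial] at this
    rw [this]; rfl

lemma quad_eq {p : ℕ} (S : Matrix (Fin p) (Fin p) ℝ) (v : Fin p → ℝ) :
    ∑ i, ∑ j, v i * S i j * v j = dotProduct v (S.mulVec v) := by
  simp only [dotProduct, Matrix.mulVec, Finset.mul_sum, mul_assoc]

lemma quad_diag {p : ℕ} (S U : Matrix (Fin p) (Fin p) ℝ) (l : Fin p → ℝ)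
    (h : U.transpose * S * U = Matrix.diagonal l) (a : Fin p → ℝ) :
    ∑ i, ∑ j, (U.mulVec a) i * S i j * (U.mulVec a) j = ∑ i, a i * l i * a i := by
  rw [quad_eq, Matrix.mulVec_mulVec, Matrix.dotProduct_mulVec, Matrix.vecMul_mulVec,
    ← Matrix.dotProduct_mulVec, ← Matrix.mul_assoc, h]
  simp [dotProduct, Matrix.mulVec_diagonal, mul_assoc]

lemma indep_diag {Ω : Type} [MeasureSpace Ω] [IsProbabilityMeasure (ℙ : Measure Ω)] {p : ℕ}
    (W : Ω → Fin p → ℝ) (hW : Measurable W) (l : Fin p → ℝ) (hl : ∀ i, 0 ≤ l i)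
    (h : ∀ a : Fin p → ℝ, Measure.map (fun ω => ∑ i, a i * W ω i) (ℙ : Measure Ω)
      = gaussianReal 0 (∑ i, a i * l i * a i).toNNReal) :
    iIndepFun (fun i ω => W ω i) (ℙ : Measure Ω) := by
  have hm : ∀ i, Measurable (fun ω => W ω i) := fun i => by fun_prop
  rw [iIndepFun_iff_charFunDual_pi (fun i => (hm i).aemeasurable)]
  intro L
  have hL : ∀ w : Fin p → ℝ, L w = ∑ i, L (Pi.single i 1) * w i := by
    intro w
    conv_lhs => rw [pi_eq_sum_univ' w]
    rw [map_sum]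
    refine Finset.sum_congr rfl fun i _ => ?_
    rw [map_smul, smul_eq_mul, mul_comm]
  have hc : ∀ a : Fin p → ℝ, charFun (Measure.map (fun ω => ∑ i, a i * W ω i) ℙ) 1
      = Complex.exp (∑ i, -((a i * l i * a i : ℝ) : ℂ) / 2) := by
    intro a
    rw [h a, charFun_gaussianReal]
    rw [Real.coe_toNNReal _ (Finset.sum_nonneg fun i _ => by
      nlinarith [mul_nonneg (hl i) (mul_self_nonneg (a i))])]
    congr 1
    simp [Finset.sum_div, neg_div]
  rw [charFunDual_eq_charFun_map_one, Measure.map_map (by fun_prop) (by fun_prop)]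
  have e1 : (L ∘ fun ω x => W ω x) = fun ω => ∑ i, L (Pi.single i 1) * W ω i := by
    ext ω; exact hL _
  rw [e1, hc, Complex.exp_sum]
  refine Finset.prod_congr rfl fun i _ => ?_
  rw [charFunDual_eq_charFun_map_one, Measure.map_map (by fun_prop) (hm i)]
  have e2 : ((L.comp (ContinuousLinearMap.single ℝ (fun _ => ℝ) i)) ∘ fun ω => W ω i)
      = fun ω => ∑ j, (Pi.single i (L (Pi.single i 1)) : Fin p → ℝ) j * W ω j := by
    ext ω
    simp only [Function.comp, ContinuousLinearMap.comp_apply, ContinuousLinearMap.single_apply]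
    rw [hL]
    simp [Pi.single_apply]
  rw [e2, hc]
  congr 1
  rw [Finset.sum_eq_single i]
  · simp
  · intro j _ hj; simp [hj]
  · simp

lemma diag_mgf {Ω : Type} [MeasureSpace Ω] [IsProbabilityMeasure (ℙ : Measure Ω)] {p : ℕ}
    (W : Ω → Fin p → ℝ) (hW : Measurable W) (l : Fin p → ℝ) (hl : ∀ i, 0 ≤ l i)
    (h : ∀ a : Fin p → ℝ, Measure.map (fun ω => ∑ i, a i * W ω i) (ℙ : Measure Ω)
      = gaussianReal 0 (∑ i, a i * l i * a i).toNNReal)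
    (t : ℝ) (ht : ∀ i, |t| * l i ≤ 1/4) :
    Integrable (fun ω => Real.exp (t * ∑ i, (W ω i ^ 2 - l i))) (ℙ : Measure Ω) ∧
    ∫ ω, Real.exp (t * ∑ i, (W ω i ^ 2 - l i)) ∂(ℙ : Measure Ω)
      ≤ Real.exp (∑ i, 4 * (t * l i)^2) := by
  have hind := indep_diag W hW l hl h
  have hm : ∀ i, Measurable (fun ω => W ω i) := fun i => by fun_prop
  have hind2 : iIndepFun (fun i ω => W ω i ^ 2 - l i) (ℙ : Measure Ω) :=
    hind.comp (fun i x => x ^ 2 - l i) (fun i => by fun_prop)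
  have hm2 : ∀ i, Measurable (fun ω => W ω i ^ 2 - l i) := fun i => by fun_prop
  have hlaw : ∀ i, Measure.map (fun ω => W ω i) ℙ = gaussianReal 0 (l i).toNNReal := by
    intro i
    have := h (Pi.single i 1)
    simpa [Pi.single_apply] using this
  have hsc : ∀ i, Integrable (fun ω => Real.exp (t * (W ω i ^ 2 - l i))) (ℙ : Measure Ω) ∧
      ∫ ω, Real.exp (t * (W ω i ^ 2 - l i)) ∂(ℙ : Measure Ω) ≤ Real.exp (4 * (t * l i)^2) := by
    intro i
    have h1 := chi_scalar (l i).toNNReal t (by rw [Real.coe_toNNReal _ (hl i)]; exact ht i)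
    rw [Real.coe_toNNReal _ (hl i), ← hlaw i] at h1
    rw [integrable_map_measure (by fun_prop) (hm i).aemeasurable,
      integral_map (hm i).aemeasurable (by fun_prop)] at h1
    exact h1
  constructor
  · have := hind2.integrable_exp_mul_sum (t := t) hm2 (s := Finset.univ) (fun i _ => (hsc i).1)
    simpa using this
  · have := hind2.mgf_sum (t := t) hm2 Finset.univ
    have e : ∫ ω, Real.exp (t * ∑ i, (W ω i ^ 2 - l i)) ∂(ℙ : Measure Ω)
       = ∏ i, mgf (fun ω => W ω i ^ 2 - l i) ℙ t := by
      rw [← this]; simp [mgf]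
    rw [e, Real.exp_sum]
    refine Finset.prod_le_prod (fun i _ => mgf_nonneg) fun i _ => (hsc i).2

theorem stmt1 (K₀ : ℕ) (hK : 2 ≤ K₀) (hKeven : Even K₀)
    (M M₀ α : ℝ) (hM : 0 < M) (hM₀ : 0 < M₀) (hα : 0 < α) :
    ∃ C : ℝ, 0 < C ∧
      ∀ (p : ℕ) (S : Matrix (Fin p) (Fin p) ℝ), S.IsSymm →
        (∀ v : Fin p → ℝ, 0 ≤ ∑ i, ∑ j, v i * S i j * v j) →
        (∀ v : Fin p → ℝ, ∑ i, ∑ j, v i * S i j * v j ≤ M₀ * ∑ i, v i ^ 2) →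
        (∀ k : ℕ, 1 ≤ k → ∀ j : Fin p,
            ∑ i ∈ Finset.univ.filter
                (fun i : Fin p => k < ((i : ℤ) - (j : ℤ)).natAbs),
              |S i j| ≤ M * (k : ℝ) ^ (-α)) →
        ∀ (Ω : Type) (_ : MeasureSpace Ω)
          (_ : IsProbabilityMeasure (ℙ : Measure Ω))
          (Z : Ω → Fin p → ℝ), Measurable Z → IsGaussianVec Z S →
        ∑ i : Fin K₀ → Fin p,
            (∫ ω, ∏ k, (Z ω (i k) ^ 2 - S (i k) (i k)) ∂ℙ)
          ≤ C * (p : ℝ) ^ (K₀ / 2) := by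
  refine ⟨(K₀.factorial : ℝ) * (4 * M₀) ^ K₀ * (2 * Real.exp (1/4)), by positivity, ?_⟩
  intro p S hS hpos hmax _ Ω _ _ Z hZ hG
  rcases Nat.eq_zero_or_pos p with hp | hp
  · subst hp
    have : IsEmpty (Fin K₀ → Fin 0) := ⟨fun f => (f ⟨0, by omega⟩).elim0⟩
    rw [Finset.univ_eq_empty, Finset.sum_empty]
    positivity
  obtain ⟨U, l, hU1, hU2, hD⟩ := diag_exists S hS
  have hmi : ∀ i, Measurable (fun ω => Z ω i) := fun i => by fun_prop
  -- integrability
  have hmem : ∀ i (q : ENNReal), q ≠ ⊤ → MemLp (fun ω => Z ω i) q (ℙ : Measure Ω) := by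
    intro i q hq
    have h1 := hG (Pi.single i 1)
    have h2 : (fun ω => ∑ j, (Pi.single i 1 : Fin p → ℝ) j * Z ω j) = fun ω => Z ω i := by
      ext ω; simp [Pi.single_apply]
    rw [h2] at h1
    have h3 := memLp_id_gaussianReal' (μ := 0)
      (v := (∑ j, ∑ k, (Pi.single i 1 : Fin p → ℝ) j * S j k *
        (Pi.single i 1 : Fin p → ℝ) k).toNNReal) q hq
    rw [← h1, memLp_map_measure_iff (by fun_prop) (hmi i).aemeasurable] at h3
    exact h3
  have hmem2 : ∀ i, MemLp (fun ω => Z ω i ^ 2 - S i i) (K₀ : ENNReal) (ℙ : Measure Ω) := by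
    intro i
    refine MemLp.sub ?_ (memLp_const _)
    have h1 := hmem i (2 * K₀) (by finiteness)
    have : ENNReal.HolderTriple (2 * K₀ : ENNReal) (2 * K₀) K₀ := by
      constructor
      rw [ENNReal.mul_inv (by simp) (by simp), ← add_mul, ENNReal.inv_two_add_inv_two, one_mul]
    have h2 := h1.mul h1 (r := (K₀ : ENNReal))
    refine h2.congr_norm ?_ ?_
    · fun_prop
    · exact ae_of_all _ fun ω => by simp [sq]
  have hint : ∀ i : Fin K₀ → Fin p,
      Integrable (fun ω => ∏ k, (Z ω (i k) ^ 2 - S (i k) (i k))) (ℙ : Measure Ω) := by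
    intro i
    have := MemLp.prod' (s := Finset.univ) (f := fun k ω => (Z ω (i k) ^ 2 - S (i k) (i k)))
      (p := fun _ => (K₀ : ENNReal)) (μ := (ℙ : Measure Ω)) (fun k _ => hmem2 (i k))
    rw [← memLp_one_iff_integrable]
    convert this
    rw [Finset.sum_const, Finset.card_univ, Fintype.card_fin, nsmul_eq_mul,
      ENNReal.mul_inv_cancel (by simp; omega) (by simp), inv_one]
  rw [← integral_finsetSum _ (fun i _ => hint i)]
  have hpow : ∀ ω, ∑ i : Fin K₀ → Fin p, ∏ k, (Z ω (i k) ^ 2 - S (i k) (i k))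
      = (∑ j, (Z ω j ^ 2 - S j j)) ^ K₀ := by
    intro ω
    rw [Finset.sum_pow']; simp
  have hintpow : Integrable (fun ω => (∑ j, (Z ω j ^ 2 - S j j)) ^ K₀) (ℙ : Measure Ω) := by
    simp_rw [← hpow]; exact integrable_finsetSum _ (fun i _ => hint i)
  simp_rw [hpow]
  -- diagonalisation
  set W : Ω → Fin p → ℝ := fun ω => U.transpose.mulVec (Z ω) with hWdef
  have hW : Measurable W := by
    rw [hWdef]; unfold Matrix.mulVec dotProduct; fun_prop
  have hWlaw : ∀ a : Fin p → ℝ, Measure.map (fun ω => ∑ i, a i * W ω i) (ℙ : Measure Ω)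
      = gaussianReal 0 (∑ i, a i * l i * a i).toNNReal := by
    intro a
    rw [← quad_diag S U l hD a, ← hG]
    congr 1
    ext ω
    change dotProduct a (U.transpose.mulVec (Z ω)) = dotProduct (U.mulVec a) (Z ω)
    rw [Matrix.dotProduct_mulVec, Matrix.vecMul_transpose]
  have hnorm : ∀ a : Fin p → ℝ, ∑ i, (U.mulVec a i)^2 = ∑ i, a i ^ 2 := by
    intro a
    have : dotProduct (U.mulVec a) (U.mulVec a) = dotProduct a a := by
      rw [Matrix.dotProduct_mulVec, Matrix.vecMul_mulVec, ← Matrix.dotProduct_mulVec, hU2,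
        Matrix.one_mulVec]
    simpa [dotProduct, sq] using this
  have hl : ∀ i, 0 ≤ l i := by
    intro i
    have := hpos (U.mulVec (Pi.single i 1))
    rw [quad_diag S U l hD] at this
    simpa [Pi.single_apply] using this
  have hlM : ∀ i, l i ≤ M₀ := by
    intro i
    have := hmax (U.mulVec (Pi.single i 1))
    rw [quad_diag S U l hD, hnorm] at this
    simpa [Pi.single_apply] using this
  have htr : ∑ j, l j = ∑ j, S j j := by
    have h1 : (Matrix.diagonal l).trace = S.trace := by
      rw [← hD, Matrix.trace_mul_comm, ← Matrix.mul_assoc, hU1, Matrix.one_mul]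
    simpa [Matrix.trace] using h1
  have hQ : ∀ ω, ∑ j, (Z ω j ^ 2 - S j j) = ∑ j, (W ω j ^ 2 - l j) := by
    intro ω
    rw [Finset.sum_sub_distrib, Finset.sum_sub_distrib, htr, ← hnorm (W ω)]
    simp only [hWdef, Matrix.mulVec_mulVec, hU1, Matrix.one_mulVec]
  simp_rw [hQ] at hintpow ⊢
  -- choice of t
  have hp0 : (0:ℝ) < p := by exact_mod_cast hp
  have hp1 : (1:ℝ) ≤ p := by exact_mod_cast hp
  have hsq1 : 1 ≤ √(p:ℝ) := Real.one_le_sqrt.mpr hp1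
  set t : ℝ := 1 / (4 * M₀ * √(p:ℝ)) with ht
  have ht0 : 0 < t := by positivity
  have htM : t * M₀ = 1 / (4 * √(p:ℝ)) := by rw [ht]; field_simp
  have hmgf : ∀ s : ℝ, |s| = t →
      Integrable (fun ω => Real.exp (s * ∑ i, (W ω i ^ 2 - l i))) (ℙ : Measure Ω) ∧
      ∫ ω, Real.exp (s * ∑ i, (W ω i ^ 2 - l i)) ∂(ℙ : Measure Ω) ≤ Real.exp (1/4) := by
    intro s hs
    have hb : ∀ i, |s| * l i ≤ 1 / (4 * √(p:ℝ)) := by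
      intro i; rw [hs, ← htM]; exact mul_le_mul_of_nonneg_left (hlM i) ht0.le
    obtain ⟨h1, h2⟩ := diag_mgf W hW l hl hWlaw s (fun i => (hb i).trans (by
      rw [div_le_div_iff₀ (by positivity) (by norm_num)]; linarith))
    refine ⟨h1, h2.trans (Real.exp_le_exp.mpr ?_)⟩
    calc ∑ i, 4 * (s * l i)^2 ≤ ∑ i : Fin p, 1 / (4 * (p:ℝ)) := by
          refine Finset.sum_le_sum fun i _ => ?_
          have h3 : (s * l i)^2 ≤ (1 / (4 * √(p:ℝ)))^2 := by
            rw [← sq_abs, abs_mul, abs_of_nonneg (hl i)]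
            exact pow_le_pow_left₀ (mul_nonneg (abs_nonneg _) (hl i)) (hb i) 2
          rw [div_pow, mul_pow 4, Real.sq_sqrt hp0.le] at h3
          calc _ ≤ 4 * (1 ^ 2 / (4 ^ 2 * (p:ℝ))) := by linarith
            _ = _ := by field_simp
      _ = 1/4 := by
          rw [Finset.sum_const, Finset.card_univ, Fintype.card_fin, nsmul_eq_mul]; field_simp
  obtain ⟨i1, b1⟩ := hmgf t (abs_of_pos ht0)
  obtain ⟨i2, b2⟩ := hmgf (-t) (by rw [abs_neg, abs_of_pos ht0])
  have hpt : ∀ x : ℝ, x ^ K₀ ≤ (K₀.factorial : ℝ) * (t⁻¹) ^ K₀ *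
      (Real.exp (t * x) + Real.exp (-t * x)) := by
    intro x
    have h1 := Real.pow_div_factorial_le_exp _ (abs_nonneg (t * x)) K₀
    rw [hKeven.pow_abs, mul_pow] at h1
    have h2 : Real.exp |t * x| ≤ Real.exp (t * x) + Real.exp (-t * x) := by
      rw [neg_mul]
      rcases abs_choice (t * x) with h | h <;> rw [h] <;>
        linarith [Real.exp_pos (t * x), Real.exp_pos (-(t*x))]
    have h3 := h1.trans h2
    have : x ^ K₀ = (K₀.factorial : ℝ) * (t⁻¹) ^ K₀ * (t ^ K₀ * x ^ K₀ / K₀.factorial) := by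
      have := Nat.factorial_pos K₀
      rw [inv_pow]; field_simp
    rw [this]
    exact mul_le_mul_of_nonneg_left h3 (by positivity)
  have hfin : (t⁻¹) ^ K₀ = (4 * M₀) ^ K₀ * (p:ℝ) ^ (K₀ / 2) := by
    rw [ht, one_div, inv_inv, mul_pow]
    congr 1
    obtain ⟨m, rfl⟩ := hKeven
    rw [← two_mul, pow_mul, Real.sq_sqrt hp0.le]
    simp
  calc _ ≤ ∫ ω, (K₀.factorial : ℝ) * (t⁻¹) ^ K₀ *
      (Real.exp (t * ∑ i, (W ω i ^ 2 - l i)) + Real.exp (-t * ∑ i, (W ω i ^ 2 - l i))) ∂ℙ :=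
        integral_mono hintpow ((i1.add i2).const_mul _) (fun ω => hpt _)
    _ = (K₀.factorial : ℝ) * (t⁻¹) ^ K₀ * ((∫ ω, Real.exp (t * ∑ i, (W ω i ^ 2 - l i)) ∂ℙ)
        + ∫ ω, Real.exp (-t * ∑ i, (W ω i ^ 2 - l i)) ∂ℙ) := by
        rw [integral_const_mul, integral_add i1 i2]
    _ ≤ (K₀.factorial : ℝ) * (t⁻¹) ^ K₀ * (2 * Real.exp (1/4)) := by
        refine mul_le_mul_of_nonneg_left (by linarith) (by positivity)
    _ = _ := by rw [hfin]; ring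
end
end

section
/- Let $\{d_i, \mathcal{F}_i\}$ be a martingale difference sequence with $\mathbb{E}(d_i \mid \mathcal{F}_{i-1}) = 0$. Then for any real $K_0 \ge 2$ and $n \ge 1$, $\mathbb{E}\big|\sum_{i=1}^n d_i\big|^{K_0} \le L_{K_0}\, n^{K_0/2 - 1} \sum_{i=1}^n \mathbb{E}|d_i|^{K_0}$, where $L_{K_0} = \{8(K_0-1)\max(1, 2^{K_0-3})\}^{K_0}$. -/
open MeasureTheory Finset

noncomputable section

/-- tangent line for x^q, q ≥ 1, nonneg -/
lemma tangent_aux {q a b : ℝ} (hq : 1 ≤ q) (ha : 0 ≤ a) (hb : 0 ≤ b) :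
    q * (a ^ (q - 1) * b) ≤ (q - 1) * a ^ q + b ^ q := by
  have hq0 : 0 < q := by linarith
  have h := Real.geom_mean_le_arith_mean2_weighted (w₁ := (q-1)/q) (w₂ := 1/q) (p₁ := a ^ q)
    (p₂ := b ^ q) (div_nonneg (by linarith) hq0.le) (by positivity) (by positivity) (by positivity)
    (by field_simp; ring)
  rw [← Real.rpow_mul ha, ← Real.rpow_mul hb, show q * ((q-1)/q) = q - 1 by field_simp,
    show q * (1/q) = 1 by field_simp, Real.rpow_one] at h
  calc q * (a ^ (q - 1) * b) ≤ q * ((q-1)/q * a ^ q + 1/q * b ^ q) := by gcongr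
    _ = _ := by field_simp

lemma abs_sub_one_mul {q a : ℝ} (hq : 1 ≤ q) (ha : 0 ≤ a) : a ^ (q - 1) * a = a ^ q := by
  rcases ha.eq_or_lt with rfl | h
  · rw [Real.zero_rpow (by linarith : q ≠ 0), mul_zero]
  · rw [Real.rpow_sub_one h.ne']; field_simp

lemma lip_pos {q u v : ℝ} (hq : 1 ≤ q) (hv : 0 ≤ v) (huv : v ≤ u) :
    u ^ q - v ^ q ≤ q * u ^ (q - 1) * (u - v) := by
  have h := tangent_aux hq (hv.trans huv) hv
  have h2 := abs_sub_one_mul hq (hv.trans huv)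
  nlinarith

lemma lip_phi_pos {q u v R : ℝ} (hq : 1 ≤ q) (hv : 0 ≤ v) (huv : v ≤ u) (hR : u ≤ R) :
    u ^ (q-1) * u - v ^ (q-1) * v ≤ q * R ^ (q - 1) * (u - v) := by
  rw [abs_sub_one_mul hq hv, abs_sub_one_mul hq (hv.trans huv)]
  refine (lip_pos hq hv huv).trans ?_
  have : u ^ (q-1) ≤ R ^ (q-1) := Real.rpow_le_rpow (hv.trans huv) hR (by linarith)
  have : 0 ≤ u - v := by linarith
  gcongr

lemma lip_phi {q u v R : ℝ} (hq : 1 ≤ q) (hu : |u| ≤ R) (hv : |v| ≤ R) (huv : v ≤ u) :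
    |u| ^ (q-1) * u - |v| ^ (q-1) * v ≤ q * R ^ (q - 1) * (u - v) := by
  rcases le_total 0 v with h | h
  · have h' := h.trans huv
    rw [abs_of_nonneg h] at *
    rw [abs_of_nonneg h'] at *
    exact lip_phi_pos hq h huv hu
  · rcases le_total 0 u with h' | h'
    · have h1 : |u| ^ (q-1) ≤ R ^ (q-1) := Real.rpow_le_rpow (abs_nonneg _) hu (by linarith)
      have h2 : |v| ^ (q-1) ≤ R ^ (q-1) := Real.rpow_le_rpow (abs_nonneg _) hv (by linarith)
      have h3 : 0 ≤ R ^ (q-1) := Real.rpow_nonneg ((abs_nonneg _).trans hu) _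
      calc |u| ^ (q-1) * u - |v| ^ (q-1) * v ≤ R ^ (q-1) * (u - v) := by nlinarith
        _ ≤ q * (R ^ (q-1) * (u - v)) := le_mul_of_one_le_left (mul_nonneg h3 (by linarith)) hq
        _ = _ := by ring
    · rw [abs_of_nonpos h] at *
      rw [abs_of_nonpos h'] at *
      have := lip_phi_pos hq (by linarith : 0 ≤ -u) (neg_le_neg huv) hv
      linarith

lemma phi_mul {q x y : ℝ} (hq : 1 ≤ q) :
    (|x+y| ^ (q-1) * (x+y) - |x| ^ (q-1) * x) * y ≤ q * (|x|+|y|) ^ (q - 1) * y^2 := by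
  have hx : |x| ≤ |x| + |y| := by linarith [abs_nonneg y]
  rcases le_total 0 y with h | h
  · have := lip_phi hq (abs_add_le x y) hx (by linarith : x ≤ x + y)
    nlinarith
  · have := lip_phi hq hx (abs_add_le x y) (by linarith : x + y ≤ x)
    nlinarith

lemma add_rpow_M {p a b : ℝ} (hp : 2 ≤ p) (ha : 0 ≤ a) (hb : 0 ≤ b) :
    (a + b) ^ (p - 2) ≤ max 1 ((2:ℝ) ^ (p-3)) * (a ^ (p-2) + b ^ (p-2)) := by
  have hs : 0 ≤ a ^ (p-2) + b ^ (p-2) := by positivity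
  rcases le_total p 3 with h | h
  · refine (Real.rpow_add_le_add_rpow ha hb (by linarith) (by linarith)).trans ?_
    exact le_mul_of_one_le_left hs (le_max_left _ _)
  · lift a to NNReal using ha
    lift b to NNReal using hb
    have := NNReal.coe_le_coe.2
      (NNReal.rpow_add_le_mul_rpow_add_rpow a b (by linarith : 1 ≤ p - 2))
    push_cast at this
    rw [show p - 2 - 1 = p - 3 by ring] at this
    refine this.trans ?_
    gcongr
    exact le_max_right _ _

lemma pointwise {p x y : ℝ} (hp : 2 ≤ p) :
    |x + y| ^ p ≤ |x| ^ p + p * (|x| ^ (p-2) * x * y) +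
      p * (p-1) * max 1 ((2:ℝ) ^ (p-3)) * (|x| ^ (p-2) * y^2 + |y| ^ p) := by
  have ht : |x+y| ^ p ≤ |x| ^ p + p * (|x+y| ^ (p-2) * (x+y) * y) := by
    have h := tangent_aux (by linarith : 1 ≤ p) (abs_nonneg (x+y)) (abs_nonneg x)
    have e1 := abs_sub_one_mul (by linarith : 1 ≤ p) (abs_nonneg (x+y))
    have e2 := abs_sub_one_mul (by linarith : 1 ≤ p - 1) (abs_nonneg (x+y))
    rw [show p - 1 - 1 = p - 2 by ring] at e2
    have h0 : 0 ≤ |x+y| ^ (p-2) := by positivity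
    have h3 : (x+y) * x ≤ |x+y| * |x| := by rw [← abs_mul]; exact le_abs_self _
    have h4 : |x+y| * |x+y| = (x+y)*(x+y) := abs_mul_abs_self _
    have e3 : |x+y| ^ p = |x+y| ^ (p-2) * ((x+y)*(x+y)) := by rw [← e1, ← e2, ← h4]; ring
    have e4 : |x+y| ^ (p-2) * ((x+y) * x) ≤ |x+y| ^ (p-1) * |x| := by
      rw [← e2, mul_assoc]; gcongr
    nlinarith
  have hl := phi_mul (q := p - 1) (x := x) (y := y) (by linarith)
  rw [show p - 1 - 1 = p - 2 by ring] at hl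
  have hM := add_rpow_M hp (abs_nonneg x) (abs_nonneg y)
  have ey : |y| ^ (p-2) * y^2 = |y| ^ p := by
    have e1 := abs_sub_one_mul (by linarith : 1 ≤ p) (abs_nonneg y)
    have e2 := abs_sub_one_mul (by linarith : 1 ≤ p - 1) (abs_nonneg y)
    rw [show p - 1 - 1 = p - 2 by ring] at e2
    rw [← e1, ← e2, ← sq_abs]; ring
  set M := max 1 ((2:ℝ) ^ (p-3))
  have h5 : (p-1) * (|x|+|y|) ^ (p-2) * y^2 ≤ (p-1) * (M * (|x| ^ (p-2) + |y| ^ (p-2))) * y^2 := by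
    have : 0 ≤ p - 1 := by linarith
    gcongr
  have h6 : p * ((|x + y| ^ (p - 2) * (x + y) - |x| ^ (p - 2) * x) * y) ≤
     p * ((p-1) * (M * (|x| ^ (p-2) + |y| ^ (p-2))) * y^2) := by
    exact mul_le_mul_of_nonneg_left (hl.trans h5) (by linarith)
  rw [← ey]
  linarith

lemma step_real {p A C u b : ℝ} (hp : 2 ≤ p) (hu : 0 ≤ u) (hb : 0 ≤ b) (hA : 1 ≤ A)
    (h1 : 4 * C ≤ p * A) (h2 : 2 * C ≤ A) :
    u ^ (p/2) + C * (u ^ (p/2-1) * b + b ^ (p/2)) ≤ (u + A * b) ^ (p/2) := by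
  have hAb : 0 ≤ A * b := by positivity
  have hq : 1 ≤ p/2 := by linarith
  have hs := Real.add_rpow_le_rpow_add hu hAb hq
  have ht := tangent_aux hq hu (add_nonneg hu hAb)
  have e := abs_sub_one_mul hq hu
  have hAA : A ≤ A ^ (p/2) := Real.self_le_rpow_of_one_le hA hq
  rw [Real.mul_rpow (by linarith) hb] at hs
  have k0 : 0 ≤ u ^ (p/2-1) * b := by positivity
  have k1 : 0 ≤ b ^ (p/2) := by positivity
  have m1 : 4 * C * (u ^ (p/2-1) * b) ≤ p * A * (u ^ (p/2-1) * b) := by gcongr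
  have m2 : 2 * C * b ^ (p/2) ≤ A ^ (p/2) * b ^ (p/2) := by gcongr; linarith
  have e2 : p/2 * (u ^ (p/2-1) * (u + A*b)) = p/2 * u ^ (p/2) + p/2 * A * (u ^ (p/2-1) * b) := by
    rw [← e]; ring
  linarith

lemma young_dom {p α β a b : ℝ} (hα : 0 ≤ α) (hβ : 0 ≤ β) (hab : α + β = p) (ha : 0 ≤ a) (hb : 0 ≤ b) :
    a ^ α * b ^ β ≤ a ^ p + b ^ p := by
  have hm : 0 ≤ max a b := le_max_of_le_left ha
  calc a ^ α * b ^ β ≤ (max a b) ^ α * (max a b) ^ β := by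
        gcongr; exacts [le_max_left _ _, le_max_right _ _]
    _ = (max a b) ^ p := by rw [← hab, Real.rpow_add_of_nonneg hm hα hβ]
    _ ≤ _ := by
      have := Real.rpow_nonneg ha p
      have := Real.rpow_nonneg hb p
      rcases max_choice a b with h | h <;> rw [h] <;> linarith

lemma holder_step {Ω : Type*} {m0 : MeasurableSpace Ω} {μ : Measure Ω} {p : ℝ} (hp : 2 ≤ p)
    {S d : Ω → ℝ} (hS : AEStronglyMeasurable S μ) (hd : AEStronglyMeasurable d μ)
    (hSp : Integrable (fun ω => |S ω| ^ p) μ) (hdp : Integrable (fun ω => |d ω| ^ p) μ) :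
    Integrable (fun ω => |S ω| ^ (p-2) * d ω ^ 2) μ ∧
    ∫ ω, |S ω| ^ (p-2) * d ω ^ 2 ∂μ ≤
      (∫ ω, |S ω| ^ p ∂μ) ^ ((p-2)/p) * (∫ ω, |d ω| ^ p ∂μ) ^ (2/p) := by
  have hp0 : 0 < p := by linarith
  have hSa := hS.aemeasurable
  have hda := hd.aemeasurable
  have hint : Integrable (fun ω => |S ω| ^ (p-2) * d ω ^ 2) μ := by
    refine (hSp.add hdp).mono' ?_ (ae_of_all _ fun ω => ?_)
    · apply AEMeasurable.aestronglyMeasurable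
      fun_prop
    · have := young_dom (p := p) (α := p - 2) (β := 2) (by linarith) (by norm_num) (by ring) 
        (abs_nonneg (S ω)) (abs_nonneg (d ω))
      rw [Real.norm_of_nonneg (by positivity)]
      simpa using this
  refine ⟨hint, ?_⟩
  have h := ENNReal.lintegral_mul_norm_pow_le (μ := μ)
    (f := fun ω => ENNReal.ofReal (|S ω| ^ p)) (g := fun ω => ENNReal.ofReal (|d ω| ^ p))
    (by fun_prop) (by fun_prop) (p := (p-2)/p) (q := 2/p) (div_nonneg (by linarith) hp0.le)
    (by positivity) (by field_simp; ring)
  have e : ∀ ω, ENNReal.ofReal (|S ω| ^ p) ^ ((p-2)/p) * ENNReal.ofReal (|d ω| ^ p) ^ (2/p)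
      = ENNReal.ofReal (|S ω| ^ (p-2) * d ω ^ 2) := by
    intro ω
    rw [ENNReal.ofReal_rpow_of_nonneg (by positivity) (div_nonneg (by linarith) hp0.le),
      ENNReal.ofReal_rpow_of_nonneg (by positivity) (by positivity),
      ← Real.rpow_mul (abs_nonneg _), ← Real.rpow_mul (abs_nonneg _),
      ← ENNReal.ofReal_mul (by positivity), show p * ((p-2)/p) = p - 2 by field_simp,
      show p * (2/p) = 2 by field_simp]
    simp
  simp_rw [e] at h
  have n1 : 0 ≤ ∫ ω, |S ω| ^ p ∂μ := integral_nonneg fun ω => by positivity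
  have n2 : 0 ≤ ∫ ω, |d ω| ^ p ∂μ := integral_nonneg fun ω => by positivity
  rw [← ofReal_integral_eq_lintegral_ofReal hint (ae_of_all _ fun ω => by positivity),
    ← ofReal_integral_eq_lintegral_ofReal hSp (ae_of_all _ fun ω => by positivity),
    ← ofReal_integral_eq_lintegral_ofReal hdp (ae_of_all _ fun ω => by positivity),
    ENNReal.ofReal_rpow_of_nonneg n1 (div_nonneg (by linarith) hp0.le),
    ENNReal.ofReal_rpow_of_nonneg n2 (by positivity), ← ENNReal.ofReal_mul (by positivity),
    ENNReal.ofReal_le_ofReal_iff (by positivity)] at h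
  exact h

lemma mart_step {Ω : Type*} {m m0 : MeasurableSpace Ω} {μ : Measure Ω} [IsProbabilityMeasure μ]
    (hm : m ≤ m0) {p : ℝ} (hp : 2 ≤ p)
    {S d : Ω → ℝ} (hS : StronglyMeasurable[m] S) (hd : Integrable d μ)
    (hSp : Integrable (fun ω => |S ω| ^ p) μ) (hdp : Integrable (fun ω => |d ω| ^ p) μ)
    (hc : μ[d | m] =ᵐ[μ] 0) :
    Integrable (fun ω => |S ω + d ω| ^ p) μ ∧
    ∫ ω, |S ω + d ω| ^ p ∂μ ≤ ∫ ω, |S ω| ^ p ∂μ + p * (p-1) * max 1 ((2:ℝ) ^ (p-3)) *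
      ((∫ ω, |S ω| ^ p ∂μ) ^ ((p-2)/p) * (∫ ω, |d ω| ^ p ∂μ) ^ (2/p) + ∫ ω, |d ω| ^ p ∂μ) := by
  have hS0 : AEStronglyMeasurable S μ := (hS.mono hm).aestronglyMeasurable
  obtain ⟨hi, hh⟩ := holder_step hp hS0 hd.aestronglyMeasurable hSp hdp
  have hSa := hS0.aemeasurable
  have hda := hd.aestronglyMeasurable.aemeasurable
  have hφ : StronglyMeasurable[m] (fun ω => |S ω| ^ (p-2) * S ω) := by
    have := hS.measurable
    exact Measurable.stronglyMeasurable (by fun_prop)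
  have hφi : Integrable (fun ω => |S ω| ^ (p-2) * S ω * d ω) μ := by
    refine (hSp.add hdp).mono' ?_ (ae_of_all _ fun ω => ?_)
    · apply AEMeasurable.aestronglyMeasurable
      fun_prop
    · have := young_dom (p := p) (α := p - 1) (β := 1) (by linarith) (by norm_num) (by ring)
        (abs_nonneg (S ω)) (abs_nonneg (d ω))
      have e2 := abs_sub_one_mul (by linarith : 1 ≤ p - 1) (abs_nonneg (S ω))
      rw [show p - 1 - 1 = p - 2 by ring] at e2
      rw [← e2, Real.rpow_one] at this
      rw [norm_mul, norm_mul, Real.norm_of_nonneg (by positivity : 0 ≤ |S ω| ^ (p-2))]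
      exact this
  have hz : ∫ ω, |S ω| ^ (p-2) * S ω * d ω ∂μ = 0 := by
    have h1 := condExp_mul_of_stronglyMeasurable_left (μ := μ) hφ hφi hd
    have h2 := integral_condExp (μ := μ) (f := fun ω => |S ω| ^ (p-2) * S ω * d ω) hm
    rw [← h2]
    have h3 : μ[fun ω => |S ω| ^ (p-2) * S ω * d ω | m] =ᵐ[μ] 0 := by
      refine Filter.EventuallyEq.trans h1 ?_
      filter_upwards [hc] with ω hω
      simp [hω]
    rw [integral_congr_ae h3]; simp
  have hR1 := hSp.add (hφi.const_mul p)
  have hR2 := (hi.add hdp).const_mul (p * (p-1) * max 1 ((2:ℝ) ^ (p-3)))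
  have hR := hR1.add hR2
  have hL : Integrable (fun ω => |S ω + d ω| ^ p) μ := by
    refine hR.mono' ?_ (ae_of_all _ fun ω => ?_)
    · apply AEMeasurable.aestronglyMeasurable
      fun_prop
    · rw [Real.norm_of_nonneg (by positivity)]
      exact pointwise hp
  refine ⟨hL, ?_⟩
  have hle := integral_mono hL hR (fun ω => pointwise hp)
  rw [integral_add' hR1 hR2, integral_add' hSp (hφi.const_mul p), integral_const_mul,
    integral_const_mul, hz, integral_add' hi hdp, mul_zero, add_zero] at hle
  refine hle.trans ?_
  have : 0 ≤ p - 1 := by linarith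
  gcongr

/-- Dharmadhikari–Fabian–Jogdeo moment inequality for martingale differences:
for `K₀ ≥ 2`, `𝔼|∑_{i=1}^n d_i|^{K₀} ≤ L_{K₀} n^{K₀/2-1} ∑ 𝔼|d_i|^{K₀}` with
`L_{K₀} = (8(K₀-1) max(1, 2^{K₀-3}))^{K₀}`. -/
theorem stmt10 {Ω : Type*} {m0 : MeasurableSpace Ω} (μ : Measure Ω)
    [IsProbabilityMeasure μ]
    (ℱ : Filtration ℕ m0) (K₀ : ℝ) (hK₀ : 2 ≤ K₀) (n : ℕ) (hn : 1 ≤ n)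
    (d : ℕ → Ω → ℝ)
    (hadapted : ∀ i, 1 ≤ i → StronglyMeasurable[ℱ i] (d i))
    (hint : ∀ i, Integrable (d i) μ)
    (hmds : ∀ i, 1 ≤ i → μ[d i | ℱ (i - 1)] =ᵐ[μ] 0) :
    ∫⁻ ω, ENNReal.ofReal (|∑ i ∈ Finset.Icc 1 n, d i ω| ^ K₀) ∂μ
      ≤ ENNReal.ofReal
          ((8 * (K₀ - 1) * max 1 ((2 : ℝ) ^ (K₀ - 3))) ^ K₀
            * (n : ℝ) ^ (K₀ / 2 - 1))
        * ∑ i ∈ Finset.Icc 1 n, ∫⁻ ω, ENNReal.ofReal (|d i ω| ^ K₀) ∂μ := by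
  have hp0 : 0 < K₀ := by linarith
  have hp1 : 0 < K₀ - 1 := by linarith
  set M := max 1 ((2 : ℝ) ^ (K₀ - 3)) with hM
  have hM1 : 1 ≤ M := le_max_left _ _
  have hn0 : (0:ℝ) < n := by exact_mod_cast hn
  by_cases hfin : ∃ i ∈ Finset.Icc 1 n, ∫⁻ ω, ENNReal.ofReal (|d i ω| ^ K₀) ∂μ = ⊤
  · rw [ENNReal.sum_eq_top.2 hfin, ENNReal.mul_top]
    · exact le_top
    · rw [Ne, ENNReal.ofReal_eq_zero, not_le]
      positivity
  push Not at hfin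
  have hdp : ∀ i ∈ Finset.Icc 1 n, Integrable (fun ω => |d i ω| ^ K₀) μ := by
    intro i hi
    have := (hint i).aestronglyMeasurable.aemeasurable
    refine (lintegral_ofReal_ne_top_iff_integrable ?_ (ae_of_all _ fun ω => by positivity)).1
      (hfin i hi)
    apply AEMeasurable.aestronglyMeasurable
    fun_prop
  set e : ℕ → ℝ := fun i => ∫ ω, |d i ω| ^ K₀ ∂μ with he
  have he0 : ∀ i, 0 ≤ e i := fun i => integral_nonneg fun ω => by positivity
  set A : ℝ := (8 * (K₀ - 1) * M) ^ 2 with hA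
  have hA0 : 0 ≤ A := by positivity
  have hK1M : K₀ - 1 ≤ (K₀ - 1) * M := le_mul_of_one_le_right hp1.le hM1
  have hX : 1 ≤ (K₀ - 1) * M := by linarith
  have hXX : (K₀ - 1) * ((K₀ - 1) * M) ≤ ((K₀ - 1) * M) * ((K₀ - 1) * M) := by gcongr
  have hA1 : 1 ≤ A := by nlinarith
  have hC2 : 2 * (K₀ * (K₀-1) * M) ≤ A := by nlinarith
  have hC1 : 4 * (K₀ * (K₀-1) * M) ≤ K₀ * A := by nlinarith
  have key : ∀ k, k ≤ n → Integrable (fun ω => |∑ i ∈ Finset.Icc 1 k, d i ω| ^ K₀) μ ∧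
      ∫ ω, |∑ i ∈ Finset.Icc 1 k, d i ω| ^ K₀ ∂μ
        ≤ (A * ∑ i ∈ Finset.Icc 1 k, e i ^ (2/K₀)) ^ (K₀/2) := by
    intro k
    induction k with
    | zero =>
      intro _
      simp [Real.zero_rpow hp0.ne', Real.zero_rpow (by positivity : K₀/2 ≠ 0)]
    | succ k ih =>
      intro hk
      obtain ⟨ih1, ih2⟩ := ih (by omega)
      have hSm : StronglyMeasurable[ℱ k] (fun ω => ∑ i ∈ Finset.Icc 1 k, d i ω) := by
        refine Finset.stronglyMeasurable_fun_sum _ fun i hi => ?_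
        have := Finset.mem_Icc.1 hi
        exact (hadapted i this.1).mono (ℱ.mono this.2)
      obtain ⟨s1, s2⟩ := mart_step (ℱ.le k) hK₀ hSm (hint (k+1)) ih1
        (hdp (k+1) (Finset.mem_Icc.2 ⟨by omega, hk⟩)) (hmds (k+1) (by omega))
      simp only [Finset.sum_Icc_succ_top (show 1 ≤ k + 1 by omega)]
      refine ⟨s1, s2.trans ?_⟩
      set u := A * ∑ i ∈ Finset.Icc 1 k, e i ^ (2/K₀) with hu
      have hu0 : 0 ≤ u := mul_nonneg hA0 (Finset.sum_nonneg fun i _ => Real.rpow_nonneg (he0 i) _)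
      have hb0 : 0 ≤ e (k+1) ^ (2/K₀) := Real.rpow_nonneg (he0 _) _
      have hst := step_real hK₀ hu0 hb0 hA1 hC1 hC2
      rw [mul_add A, ← hu]
      refine le_trans ?_ hst
      have ha : (∫ ω, |∑ i ∈ Finset.Icc 1 k, d i ω| ^ K₀ ∂μ) ^ ((K₀-2)/K₀) ≤ u ^ (K₀/2-1) := by
        calc _ ≤ (u ^ (K₀/2)) ^ ((K₀-2)/K₀) :=
              Real.rpow_le_rpow (integral_nonneg fun ω => by positivity) ih2
                (div_nonneg (by linarith) hp0.le)
          _ = _ := by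
            rw [← Real.rpow_mul hu0]; congr 1; field_simp
      have hb : (e (k+1) ^ (2/K₀)) ^ (K₀/2) = e (k+1) := by
        rw [← Real.rpow_mul (he0 _), show 2/K₀ * (K₀/2) = 1 by field_simp, Real.rpow_one]
      rw [hb]
      change _ + K₀ * (K₀-1) * M * (_ * e (k+1) ^ (2/K₀) + e (k+1)) ≤ _
      gcongr
  obtain ⟨k1, k2⟩ := key n le_rfl
  rw [← ofReal_integral_eq_lintegral_ofReal k1 (ae_of_all _ fun ω => by positivity)]
  have hsum : ∑ i ∈ Finset.Icc 1 n, ∫⁻ ω, ENNReal.ofReal (|d i ω| ^ K₀) ∂μ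
      = ENNReal.ofReal (∑ i ∈ Finset.Icc 1 n, e i) := by
    rw [ENNReal.ofReal_sum_of_nonneg fun i _ => he0 i]
    refine Finset.sum_congr rfl fun i hi => ?_
    rw [ofReal_integral_eq_lintegral_ofReal (hdp i hi) (ae_of_all _ fun ω => by positivity)]
  rw [hsum, ← ENNReal.ofReal_mul (by positivity)]
  apply ENNReal.ofReal_le_ofReal
  refine k2.trans ?_
  have hpm := Real.rpow_sum_le_const_mul_sum_rpow_of_nonneg (Finset.Icc 1 n)
    (f := fun i => e i ^ (2/K₀)) (p := K₀/2) (by linarith) fun i _ => Real.rpow_nonneg (he0 i) _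
  have hb : ∀ i, (e i ^ (2/K₀)) ^ (K₀/2) = e i := fun i => by
    rw [← Real.rpow_mul (he0 _), show 2/K₀ * (K₀/2) = 1 by field_simp, Real.rpow_one]
  simp only [hb, Nat.card_Icc, Nat.add_sub_cancel] at hpm
  rw [Real.mul_rpow hA0 (Finset.sum_nonneg fun i _ => Real.rpow_nonneg (he0 i) _), mul_assoc]
  have hAp : A ^ (K₀/2) = (8 * (K₀ - 1) * M) ^ K₀ := by
    rw [hA, ← Real.rpow_natCast, ← Real.rpow_mul (by positivity)]
    congr 1; push_cast; ring
  rw [hAp]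
  gcongr
end
end

section
/- Let $Z_1, Z_2$ be i.i.d. $N_p(0,\Sigma)$ with $\Sigma \in \mathcal{F}_\alpha$ (so $\lambda_{\max}(\Sigma) \le M_0$ and $\max_j\sum_{i:|i-j|>k}|\sigma_{ij}| \le Mk^{-\alpha}$). Define $H_n(Z_1,Z_2) = \frac{2}{n^2}\sum_{1\le i,j\le p}\bar{A}^{(\tau)}_{ij}(z_{1i}z_{1j}-\sigma_{ij})(z_{2i}z_{2j}-\sigma_{ij})$, where $|\bar{A}^{(\tau)}_{ij}| \le 2$ for all $i,j$. Then for any even $K_0 \ge 2$ there is a constant $C$ (depending on $K_0, M, M_0$) such that $\mathbb{E}[H_n(Z_1,Z_2)^{K_0}] \le C\, p^{K_0}/n^{2K_0}$ for all $n \ge 3$ and $1 \le \tau \le p$. -/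
open MeasureTheory ProbabilityTheory Finset

noncomputable section

/-- A real function with finite moments of all orders. -/
def AllLp {X : Type*} [MeasurableSpace X] (ν : Measure X) (f : X → ℝ) : Prop :=
  ∀ q : ℕ, MemLp f (q : ENNReal) ν

section AllLpLemmas

variable {X : Type*} [MeasurableSpace X] {ν : Measure X} {f g : X → ℝ}

theorem AllLp.mul (hf : AllLp ν f) (hg : AllLp ν g) : AllLp ν (fun x => f x * g x) := by
  intro q
  have : ENNReal.HolderTriple ((2 * q : ℕ) : ENNReal) ((2 * q : ℕ) : ENNReal) (q : ENNReal) := by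
    constructor
    rcases Nat.eq_zero_or_pos q with h | h
    · subst h; simp
    · have hq : (q : ENNReal) ≠ 0 := by exact_mod_cast h.ne'
      push_cast
      rw [ENNReal.mul_inv (by simp) (by simp), ← add_mul, ENNReal.inv_two_add_inv_two, one_mul]
  exact (hg (2 * q)).mul' (hf (2 * q))

theorem AllLp.add (hf : AllLp ν f) (hg : AllLp ν g) : AllLp ν (fun x => f x + g x) :=
  fun q => (hf q).add (hg q)

theorem AllLp.sub (hf : AllLp ν f) (hg : AllLp ν g) : AllLp ν (fun x => f x - g x) :=
  fun q => (hf q).sub (hg q)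

theorem AllLp.const [IsFiniteMeasure ν] (c : ℝ) : AllLp ν (fun _ => c) :=
  fun _ => memLp_const c

theorem AllLp.pow [IsFiniteMeasure ν] (hf : AllLp ν f) (m : ℕ) : AllLp ν (fun x => f x ^ m) := by
  induction m with
  | zero => simpa using AllLp.const (ν := ν) 1
  | succ k ih => simpa only [pow_succ] using ih.mul hf

theorem AllLp.sum {ι : Type*} (s : Finset ι) {F : ι → X → ℝ} (h : ∀ i, AllLp ν (F i)) :
    AllLp ν (fun x => ∑ i ∈ s, F i x) :=
  fun q => memLp_finsetSum s fun i _ => h i q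

theorem AllLp.integrable (hf : AllLp ν f) : Integrable f ν := by
  rw [← memLp_one_iff_integrable]; simpa using hf 1

end AllLpLemmas

/-- Moment constant of the standard normal. -/
def gmom (m : ℕ) : ℝ := ∫ x, x ^ (2 * m) ∂(gaussianReal 0 1)

theorem gmom_nonneg (m : ℕ) : 0 ≤ gmom m :=
  integral_nonneg fun x => (even_two_mul m).pow_nonneg x

theorem gaussian_moment (v : NNReal) (m : ℕ) :
    ∫ x, x ^ (2 * m) ∂(gaussianReal 0 v) = gmom m * (v : ℝ) ^ m := by
  have h := gaussianReal_map_const_mul (μ := 0) (v := 1) (Real.sqrt v)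
  have h2 : gaussianReal (Real.sqrt v * 0) (NNReal.mk (Real.sqrt v ^ 2) (sq_nonneg _) * 1)
      = gaussianReal 0 v := by
    congr 1
    · simp
    · ext; simp
  have h3 : gaussianReal 0 v = (gaussianReal 0 1).map (Real.sqrt v * ·) := by
    rw [h]; exact h2.symm
  rw [h3, integral_map (by fun_prop) (by fun_prop)]
  simp_rw [mul_pow]
  have hv : (Real.sqrt (v : ℝ)) ^ 2 = (v : ℝ) := Real.sq_sqrt v.coe_nonneg
  rw [integral_const_mul, pow_mul, hv, gmom, mul_comm]

/-- The law-level version of `IsGaussianVec`. -/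
def GLaw {p : ℕ} (μ : Measure (Fin p → ℝ)) (S : Matrix (Fin p) (Fin p) ℝ) : Prop :=
  ∀ a : Fin p → ℝ,
    μ.map (fun x => ∑ i, a i * x i) = gaussianReal 0 (∑ i, ∑ j, a i * S i j * a j).toNNReal

theorem measurable_lin {p : ℕ} (a : Fin p → ℝ) :
    Measurable (fun x : Fin p → ℝ => ∑ i, a i * x i) := by
  refine Finset.measurable_sum _ fun i _ => ?_
  have h : Measurable (fun x : Fin p → ℝ => x i) := measurable_pi_apply i
  exact h.const_mul (a i)

section GaussLaw

variable {p : ℕ} {μ μ' : Measure (Fin p → ℝ)} {S : Matrix (Fin p) (Fin p) ℝ}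

theorem GLaw.allLp_lin (h : GLaw μ S) (a : Fin p → ℝ) : AllLp μ (fun x => ∑ i, a i * x i) := by
  intro q
  have h1 : MemLp id (q : ENNReal) (μ.map (fun x => ∑ i, a i * x i)) := by
    rw [h a]; exact memLp_id_gaussianReal' _ (by simp)
  exact (memLp_map_measure_iff (g := id) (f := fun x : Fin p → ℝ => ∑ i, a i * x i)
    (by fun_prop) (measurable_lin a).aemeasurable).1 h1

theorem GLaw.allLp (h : GLaw μ S) (i : Fin p) : AllLp μ (fun x => x i) := by
  simpa [Pi.single_apply] using h.allLp_lin (Pi.single i 1)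

theorem GLaw.moment (h : GLaw μ S)
    (hS : ∀ v : Fin p → ℝ, 0 ≤ ∑ i, ∑ j, v i * S i j * v j) (a : Fin p → ℝ) (m : ℕ) :
    ∫ x, (∑ i, a i * x i) ^ (2 * m) ∂μ = gmom m * (∑ i, ∑ j, a i * S i j * a j) ^ m := by
  have h1 := gaussian_moment (∑ i, ∑ j, a i * S i j * a j).toNNReal m
  rw [← h a, integral_map (measurable_lin a).aemeasurable (by fun_prop), Real.coe_toNNReal _ (hS a)] at h1
  exact h1

theorem gmom_one : gmom 1 = 1 := by
  have h := variance_id_gaussianReal (μ := 0) (v := 1)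
  rw [variance_of_integral_eq_zero (by fun_prop) (by simp)] at h
  simpa [gmom] using h

theorem GLaw.isProb (h : GLaw μ S) : IsProbabilityMeasure μ := by
  have h1 : IsProbabilityMeasure (μ.map (fun x => ∑ i, (0 : Fin p → ℝ) i * x i)) := by
    rw [h 0]; infer_instance
  exact (Measure.isProbabilityMeasure_map_iff (measurable_lin 0).aemeasurable).1 h1

theorem GLaw.cov (h : GLaw μ S) (hsym : S.IsSymm)
    (hS : ∀ v : Fin p → ℝ, 0 ≤ ∑ i, ∑ j, v i * S i j * v j) (i j : Fin p) :
    ∫ x, x i * x j ∂μ = S i j := by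
  have h1 := h.moment hS (Pi.single i 1 + Pi.single j 1) 1
  have h2 := h.moment hS (Pi.single i 1) 1
  have h3 := h.moment hS (Pi.single j 1) 1
  simp only [gmom_one, one_mul, pow_one, mul_one, Pi.add_apply, add_mul, mul_add,
    Finset.sum_add_distrib, Pi.single_apply, ite_mul, mul_ite, zero_mul, mul_zero,
    Finset.sum_ite_eq', Finset.mem_univ, if_true, Finset.sum_ite_eq] at h1 h2 h3
  have e : ∀ x : Fin p → ℝ, (x i + x j) ^ 2 = x i ^ 2 + x j ^ 2 + 2 * (x i * x j) := by
    intro x; ring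
  have := h.isProb
  have I1 : Integrable (fun x => x i ^ 2) μ := ((h.allLp i).pow 2).integrable
  have I2 : Integrable (fun x => x j ^ 2) μ := ((h.allLp j).pow 2).integrable
  have I12 : Integrable (fun x => x i ^ 2 + x j ^ 2) μ := I1.add I2
  have I3 : Integrable (fun x => 2 * (x i * x j)) μ :=
    (((h.allLp i).mul (h.allLp j)).integrable).const_mul 2
  simp_rw [e] at h1
  rw [integral_add I12 I3, integral_add I1 I2, integral_const_mul] at h1
  have hs : S j i = S i j := hsym.apply i j
  linarith

theorem GLaw.isGaussian (h : GLaw μ S) : IsGaussian μ ∧ ∀ L : StrongDual ℝ (Fin p → ℝ), μ[L] = 0 := by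
  have key : ∀ L : StrongDual ℝ (Fin p → ℝ), ∃ v : NNReal, μ.map L = gaussianReal 0 v := by
    intro L
    have hL : (L : (Fin p → ℝ) → ℝ) = fun x => ∑ i, L (Pi.single i 1) * x i := by
      ext x
      conv_lhs => rw [pi_eq_sum_univ' x]
      simp only [map_sum, map_smul, smul_eq_mul]
      refine Finset.sum_congr rfl fun i _ => ?_
      rw [mul_comm]
    rw [hL]
    exact ⟨_, h _⟩
  refine ⟨isGaussian_of_map_eq_gaussianReal fun L => ⟨0, key L⟩, fun L => ?_⟩
  obtain ⟨v, hv⟩ := key L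
  have : ∫ y, y ∂(μ.map L) = 0 := by rw [hv]; simp
  rwa [integral_map (by fun_prop) (by fun_prop)] at this

/-- Minkowski-type bound. -/
theorem minkowski_bound {X ι : Type*} [MeasurableSpace X] [Fintype ι] {ν : Measure X}
    [IsFiniteMeasure ν] (Y : ι → X → ℝ) (hY : ∀ j, AllLp ν (Y j)) (w : ι → ℝ)
    (hw : ∀ j, 0 ≤ w j) (c : ℝ) (m : ℕ) (hm : m ≠ 0)
    (h0 : ∀ j, w j = 0 → ∀ x, Y j x = 0)
    (hc : ∀ j, ∫ x, Y j x ^ (2 * m) ∂ν ≤ c * w j ^ m) :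
    ∫ x, (∑ j, Y j x ^ 2) ^ m ∂ν ≤ c * (∑ j, w j) ^ m := by
  set W := ∑ j, w j with hW
  rcases (Finset.sum_nonneg fun j _ => hw j : 0 ≤ ∑ j, w j).eq_or_lt with hz | hpos
  · have hz' : ∀ j, w j = 0 := by
      intro j
      exact (Finset.sum_eq_zero_iff_of_nonneg (fun j _ => hw j)).1 hz.symm j (Finset.mem_univ j)
    have : ∀ x, (∑ j, Y j x ^ 2) ^ m = 0 := by
      intro x
      rw [Finset.sum_eq_zero (fun j _ => by rw [h0 j (hz' j)]; simp), zero_pow hm]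
    simp_rw [this]
    rw [hW, ← hz, zero_pow hm]; simp
  · rw [← hW] at hpos
    have hpt : ∀ x, (∑ j, Y j x ^ 2) ^ m
        ≤ ∑ j, (W ^ m * (w j / W) * (w j ^ m)⁻¹) * Y j x ^ (2 * m) := by
      intro x
      have h1 := Real.pow_arith_mean_le_arith_mean_pow Finset.univ (fun j => w j / W)
        (fun j => Y j x ^ 2 / w j) (fun j _ => div_nonneg (hw j) hpos.le)
        (by rw [← Finset.sum_div, ← hW, div_self hpos.ne'])
        (fun j _ => div_nonneg (sq_nonneg _) (hw j)) m
      have h2 : ∑ j, Y j x ^ 2 = W * ∑ j, w j / W * (Y j x ^ 2 / w j) := by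
        rw [Finset.mul_sum]
        refine Finset.sum_congr rfl fun j _ => ?_
        by_cases hj : w j = 0
        · rw [h0 j hj]; simp
        · field_simp
      rw [h2, mul_pow]
      refine (mul_le_mul_of_nonneg_left h1 (by positivity)).trans (le_of_eq ?_)
      rw [Finset.mul_sum]
      refine Finset.sum_congr rfl fun j _ => ?_
      rw [div_pow, ← pow_mul]
      ring
    have I : ∀ j, Integrable (fun x => (W ^ m * (w j / W) * (w j ^ m)⁻¹) * Y j x ^ (2 * m)) ν :=
      fun j => (((hY j).pow (2 * m)).integrable).const_mul _
    calc ∫ x, (∑ j, Y j x ^ 2) ^ m ∂ν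
        ≤ ∫ x, ∑ j, (W ^ m * (w j / W) * (w j ^ m)⁻¹) * Y j x ^ (2 * m) ∂ν := by
          refine integral_mono ?_ ?_ hpt
          · exact ((AllLp.sum _ fun j => (hY j).pow 2).pow m).integrable
          · exact integrable_finsetSum _ fun j _ => I j
      _ = ∑ j, (W ^ m * (w j / W) * (w j ^ m)⁻¹) * ∫ x, Y j x ^ (2 * m) ∂ν := by
          rw [integral_finsetSum _ fun j _ => I j]
          simp_rw [integral_const_mul]
      _ ≤ ∑ j, c * W ^ m * (w j / W) := by
          refine Finset.sum_le_sum fun j _ => ?_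
          by_cases hj : w j = 0
          · simp [hj]
          · have hwj : 0 < w j := lt_of_le_of_ne (hw j) (Ne.symm hj)
            refine (mul_le_mul_of_nonneg_left (hc j) (by positivity)).trans (le_of_eq ?_)
            field_simp
      _ = c * W ^ m := by
          rw [← Finset.mul_sum, ← Finset.sum_div, ← hW, div_self hpos.ne', mul_one]

/-- Decoupled chaos bound. -/
theorem bilinear_bound (h : GLaw μ S) (h' : GLaw μ' S)
    (hS : ∀ v : Fin p → ℝ, 0 ≤ ∑ i, ∑ j, v i * S i j * v j) {M₀ : ℝ} (hM₀ : 0 < M₀)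
    (hS' : ∀ v : Fin p → ℝ, ∑ i, ∑ j, v i * S i j * v j ≤ M₀ * ∑ i, v i ^ 2)
    (D : Fin p → Fin p → ℝ) (m : ℕ) (hm : m ≠ 0) :
    ∫ z, (∑ i, ∑ j, D i j * z.1 i * z.2 j) ^ (2 * m) ∂(μ.prod μ')
      ≤ gmom m ^ 2 * M₀ ^ (2 * m) * (∑ i, ∑ j, D i j ^ 2) ^ m := by
  have := h.isProb
  have := h'.isProb
  have hall : AllLp (μ.prod μ') (fun z => ∑ i, ∑ j, D i j * z.1 i * z.2 j) :=
    AllLp.sum _ fun i => AllLp.sum _ fun j =>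
      ((AllLp.const (D i j)).mul fun q => (h.allLp i q).comp_fst μ').mul
        fun q => (h'.allLp j q).comp_snd μ
  rw [integral_prod _ (hall.pow _).integrable]
  have e : ∀ x y : Fin p → ℝ, ∑ i, ∑ j, D i j * x i * y j
      = ∑ j, (∑ i, D i j * x i) * y j := by
    intro x y
    rw [Finset.sum_comm]
    simp_rw [Finset.sum_mul]
  have hYall : ∀ j, AllLp μ (fun x => ∑ i, D i j * x i) := fun j => h.allLp_lin _
  have inner : ∀ x : Fin p → ℝ,
      ∫ y, (∑ i, ∑ j, D i j * x i * y j) ^ (2 * m) ∂μ'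
        ≤ gmom m * M₀ ^ m * (∑ j, (∑ i, D i j * x i) ^ 2) ^ m := by
    intro x
    simp_rw [e]
    rw [h'.moment hS, mul_assoc, ← mul_pow]
    refine mul_le_mul_of_nonneg_left ?_ (gmom_nonneg m)
    exact pow_le_pow_left₀ (hS _) (hS' _) m
  have outer := minkowski_bound (ν := μ) (fun j x => ∑ i, D i j * x i) hYall
    (fun j => M₀ * ∑ i, D i j ^ 2) (fun j => by positivity) (gmom m) m hm
    (by
      intro j hj x
      have h1 : ∑ i, D i j ^ 2 = 0 := by
        rcases mul_eq_zero.1 hj with h2 | h2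
        · exact absurd h2 hM₀.ne'
        · exact h2
      refine Finset.sum_eq_zero fun i _ => ?_
      have := (Finset.sum_eq_zero_iff_of_nonneg (fun i _ => sq_nonneg (D i j))).1 h1 i
        (Finset.mem_univ i)
      rw [pow_eq_zero_iff two_ne_zero] at this
      rw [this, zero_mul])
    (by
      intro j
      rw [h.moment hS]
      exact mul_le_mul_of_nonneg_left (pow_le_pow_left₀ (hS _) (hS' _) m) (gmom_nonneg m))
  calc _ ≤ ∫ x, gmom m * M₀ ^ m * (∑ j, (∑ i, D i j * x i) ^ 2) ^ m ∂μ := by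
        refine integral_mono ?_ ?_ inner
        · exact (hall.pow _).integrable.integral_prod_left
        · exact (((AllLp.sum _ fun j => (hYall j).pow 2).pow m).integrable).const_mul _
    _ ≤ gmom m * M₀ ^ m * (gmom m * (∑ j, M₀ * ∑ i, D i j ^ 2) ^ m) := by
        rw [integral_const_mul]
        exact mul_le_mul_of_nonneg_left outer (mul_nonneg (gmom_nonneg m) (by positivity))
    _ = _ := by
        rw [← Finset.mul_sum, Finset.sum_comm, mul_pow]
        ring

/-- Moment bound for centered Gaussian quadratic forms. -/
theorem quad_bound (h : GLaw μ S) (hsym : S.IsSymm)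
    (hS : ∀ v : Fin p → ℝ, 0 ≤ ∑ i, ∑ j, v i * S i j * v j) {M₀ : ℝ} (hM₀ : 0 < M₀)
    (hS' : ∀ v : Fin p → ℝ, ∑ i, ∑ j, v i * S i j * v j ≤ M₀ * ∑ i, v i ^ 2)
    (B : Fin p → Fin p → ℝ) (m : ℕ) (hm : m ≠ 0) :
    ∫ z, (∑ i, ∑ j, B i j * (z i * z j - S i j)) ^ (2 * m) ∂μ
      ≤ gmom m ^ 2 * M₀ ^ (2 * m) * 4 ^ m * (∑ i, ∑ j, B i j ^ 2) ^ m := by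
  have := h.isProb
  obtain ⟨hG, hG0⟩ := h.isGaussian
  set Q : (Fin p → ℝ) → ℝ := fun z => ∑ i, ∑ j, B i j * (z i * z j) with hQ
  have hQall : AllLp μ Q := AllLp.sum _ fun i => AllLp.sum _ fun j =>
    (AllLp.const (B i j)).mul ((h.allLp i).mul (h.allLp j))
  have hQint : ∫ z, Q z ∂μ = ∑ i, ∑ j, B i j * S i j := by
    have I : ∀ i j, Integrable (fun z => B i j * (z i * z j)) μ := fun i j =>
      (((h.allLp i).mul (h.allLp j)).integrable).const_mul _
    rw [integral_finsetSum _ fun i _ => integrable_finsetSum _ fun j _ => I i j]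
    refine Finset.sum_congr rfl fun i _ => ?_
    rw [integral_finsetSum _ fun j _ => I i j]
    refine Finset.sum_congr rfl fun j _ => ?_
    rw [integral_const_mul, h.cov hsym hS]
  have e1 : ∀ z : Fin p → ℝ, ∑ i, ∑ j, B i j * (z i * z j - S i j) = ∫ z', (Q z - Q z') ∂μ := by
    intro z
    rw [integral_sub (integrable_const _) hQall.integrable, hQint]
    simp [hQ, mul_sub, Finset.sum_sub_distrib]
  have hdall : AllLp (μ.prod μ) (fun z => Q z.1 - Q z.2) :=
    AllLp.sub (fun q => (hQall q).comp_fst μ) (fun q => (hQall q).comp_snd μ)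
  have hjensen : ∀ z, (∫ z', (Q z - Q z') ∂μ) ^ (2 * m) ≤ ∫ z', (Q z - Q z') ^ (2 * m) ∂μ := by
    intro z
    have hz : AllLp μ (fun z' => Q z - Q z') := (AllLp.const _).sub hQall
    exact ((even_two_mul m).convexOn_pow (𝕜 := ℝ)).map_integral_le (by fun_prop) isClosed_univ
      (by simp) hz.integrable (hz.pow (2 * m)).integrable
  have hrot := IsGaussian.map_rotation_eq_self_of_forall_strongDual_eq_zero hG0 (Real.pi / 4)
  have hQm : Measurable Q := by fun_prop
  calc ∫ z, (∑ i, ∑ j, B i j * (z i * z j - S i j)) ^ (2 * m) ∂μ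
      ≤ ∫ z, ∫ z', (Q z - Q z') ^ (2 * m) ∂μ ∂μ := by
        simp_rw [e1]
        refine integral_mono ?_ (hdall.pow _).integrable.integral_prod_left hjensen
        have : (fun z => (∫ z', (Q z - Q z') ∂μ) ^ (2 * m))
            = fun z => (Q z - ∑ i, ∑ j, B i j * S i j) ^ (2 * m) := by
          ext z
          rw [integral_sub (integrable_const _) hQall.integrable, hQint]
          simp
        rw [this]
        exact ((hQall.sub (AllLp.const _)).pow _).integrable
    _ = ∫ z, (Q z.1 - Q z.2) ^ (2 * m) ∂(μ.prod μ) := by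
        rw [integral_prod _ (hdall.pow _).integrable]
    _ = ∫ z, (∑ i, ∑ j, (B i j + B j i) * z.1 i * z.2 j) ^ (2 * m) ∂(μ.prod μ) := by
        conv_lhs => rw [← hrot]
        rw [integral_map (by fun_prop)
          (by apply Measurable.aestronglyMeasurable; fun_prop)]
        congr 1
        ext z
        congr 1
        simp only [hQ, ContinuousLinearMap.rotation_apply, Real.cos_pi_div_four,
          Real.sin_pi_div_four, Pi.add_apply, Pi.smul_apply, smul_eq_mul]
        have s2 : Real.sqrt 2 ^ 2 = 2 := Real.sq_sqrt (by norm_num)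
        have : ∑ i, ∑ j, (B i j + B j i) * z.1 i * z.2 j
            = ∑ i, ∑ j, B i j * (z.1 i * z.2 j + z.1 j * z.2 i) := by
          simp only [add_mul, mul_add, Finset.sum_add_distrib]
          congr 1
          · simp only [mul_assoc]
          · rw [Finset.sum_comm]
            simp only [mul_assoc]
        rw [this, ← Finset.sum_sub_distrib]
        refine Finset.sum_congr rfl fun i _ => ?_
        rw [← Finset.sum_sub_distrib]
        refine Finset.sum_congr rfl fun j _ => ?_
        linear_combination (B i j * (z.1 i * z.2 j + z.1 j * z.2 i) / 2) * s2
    _ ≤ gmom m ^ 2 * M₀ ^ (2 * m) * (∑ i, ∑ j, (B i j + B j i) ^ 2) ^ m :=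
        bilinear_bound h h hS hM₀ hS' (fun i j => B i j + B j i) m hm
    _ ≤ gmom m ^ 2 * M₀ ^ (2 * m) * (4 * ∑ i, ∑ j, B i j ^ 2) ^ m := by
        refine mul_le_mul_of_nonneg_left (pow_le_pow_left₀ (by positivity) ?_ m)
          (by have := gmom_nonneg m; positivity)
        have h1 : ∑ i, ∑ j, (B i j + B j i) ^ 2 ≤ ∑ i, ∑ j, (2 * B i j ^ 2 + 2 * B j i ^ 2) :=
          Finset.sum_le_sum fun i _ => Finset.sum_le_sum fun j _ => by
            nlinarith [sq_nonneg (B i j - B j i)]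
        refine h1.trans (le_of_eq ?_)
        simp only [Finset.sum_add_distrib, ← Finset.mul_sum]
        rw [Finset.sum_comm (f := fun i j => B j i ^ 2)]
        ring
    _ = _ := by rw [mul_pow]; ring

theorem main_bound (h : GLaw μ S) (h' : GLaw μ' S) (hsym : S.IsSymm)
    (hS : ∀ v : Fin p → ℝ, 0 ≤ ∑ i, ∑ j, v i * S i j * v j) {M₀ : ℝ} (hM₀ : 0 < M₀)
    (hS' : ∀ v : Fin p → ℝ, ∑ i, ∑ j, v i * S i j * v j ≤ M₀ * ∑ i, v i ^ 2)
    (A : Matrix (Fin p) (Fin p) ℝ) (hA : ∀ i j, |A i j| ≤ 2) (m : ℕ) (hm : m ≠ 0) :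
    ∫ z, (∑ i, ∑ j, A i j * (z.1 i * z.1 j - S i j) * (z.2 i * z.2 j - S i j)) ^ (2 * m)
        ∂(μ.prod μ')
      ≤ (gmom m ^ 2 * M₀ ^ (2 * m) * 4 ^ m) ^ 2 * 4 ^ m * (p : ℝ) ^ (2 * m) := by
  have := h.isProb
  have := h'.isProb
  obtain ⟨c, hcdef⟩ : ∃ c, c = gmom m ^ 2 * M₀ ^ (2 * m) * 4 ^ m := ⟨_, rfl⟩
  have hc0 : 0 ≤ c := by have := gmom_nonneg m; rw [hcdef]; positivity
  rw [← hcdef]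
  have hX : ∀ i j, AllLp μ (fun x => x i * x j - S i j) := fun i j =>
    ((h.allLp i).mul (h.allLp j)).sub (AllLp.const _)
  have hX' : ∀ i j, AllLp μ' (fun x => x i * x j - S i j) := fun i j =>
    ((h'.allLp i).mul (h'.allLp j)).sub (AllLp.const _)
  have hall : AllLp (μ.prod μ') (fun z =>
      ∑ i, ∑ j, A i j * (z.1 i * z.1 j - S i j) * (z.2 i * z.2 j - S i j)) :=
    AllLp.sum _ fun i => AllLp.sum _ fun j =>
      ((AllLp.const (A i j)).mul fun q => (hX i j q).comp_fst μ').mul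
        fun q => (hX' i j q).comp_snd μ
  rw [integral_prod _ (hall.pow _).integrable]
  have inner : ∀ x : Fin p → ℝ,
      ∫ y, (∑ i, ∑ j, A i j * (x i * x j - S i j) * (y i * y j - S i j)) ^ (2 * m) ∂μ'
        ≤ c * 4 ^ m * (∑ k : Fin p × Fin p, (x k.1 * x k.2 - S k.1 k.2) ^ 2) ^ m := by
    intro x
    refine (quad_bound h' hsym hS hM₀ hS' (fun i j => A i j * (x i * x j - S i j)) m hm).trans ?_
    rw [← hcdef, mul_assoc c, ← mul_pow]
    refine mul_le_mul_of_nonneg_left (pow_le_pow_left₀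
      (Finset.sum_nonneg fun i _ => Finset.sum_nonneg fun j _ => sq_nonneg _) ?_ m) hc0
    rw [Fintype.sum_prod_type, Finset.mul_sum]
    refine Finset.sum_le_sum fun i _ => ?_
    rw [Finset.mul_sum]
    refine Finset.sum_le_sum fun j _ => ?_
    rw [mul_pow]
    refine mul_le_mul_of_nonneg_right ?_ (sq_nonneg _)
    have := sq_le_sq' (neg_le_of_abs_le (hA i j)) (le_of_abs_le (hA i j))
    linarith
  have outer := minkowski_bound (ν := μ)
    (fun (k : Fin p × Fin p) x => x k.1 * x k.2 - S k.1 k.2) (fun k => hX _ _)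
    (fun _ => 1) (fun _ => zero_le_one) c m hm (fun _ hh => absurd hh one_ne_zero)
    (by
      rintro ⟨i, j⟩
      have h1 := quad_bound h hsym hS hM₀ hS'
        (fun i' j' => (if i' = i then 1 else 0) * (if j' = j then 1 else 0)) m hm
      simpa [← hcdef, ite_pow, mul_pow, hm] using h1)
  calc _ ≤ ∫ x, c * 4 ^ m * (∑ k : Fin p × Fin p, (x k.1 * x k.2 - S k.1 k.2) ^ 2) ^ m ∂μ := by
        refine integral_mono (hall.pow _).integrable.integral_prod_left ?_ inner
        exact (((AllLp.sum _ fun k : Fin p × Fin p =>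
          (hX k.1 k.2).pow 2).pow m).integrable).const_mul _
    _ ≤ c * 4 ^ m * (c * (∑ k : Fin p × Fin p, (1 : ℝ)) ^ m) := by
        rw [integral_const_mul]
        exact mul_le_mul_of_nonneg_left outer (by positivity)
    _ = _ := by
        simp only [Finset.sum_const, Finset.card_univ, Fintype.card_prod, Fintype.card_fin,
          nsmul_eq_mul, mul_one]
        push_cast
        rw [pow_mul, sq (p : ℝ)]
        ring

end GaussLaw

theorem IsGaussianVec.glaw {Ω : Type*} [MeasureSpace Ω] {p : ℕ} {Z : Ω → Fin p → ℝ}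
    {S : Matrix (Fin p) (Fin p) ℝ} (h : IsGaussianVec Z S) (hZ : Measurable Z) :
    GLaw ((ℙ : Measure Ω).map Z) S := by
  intro a
  rw [Measure.map_map (measurable_lin a) hZ]
  exact h a

/-- For `Z₁, Z₂` i.i.d. `N_p(0,Σ)` with `Σ ∈ 𝓕_α`, and
`H_n(Z₁,Z₂) = (2/n²) ∑_{i,j} Ā_ij (z_{1i}z_{1j}−σ_ij)(z_{2i}z_{2j}−σ_ij)` with
`|Ā_ij| ≤ 2`, for any even `K₀ ≥ 2` there is `C` with
`𝔼 H_n(Z₁,Z₂)^{K₀} ≤ C p^{K₀}/n^{2K₀}` for `n ≥ 3`, `1 ≤ τ ≤ p`. -/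
theorem stmt11 (M M₀ α : ℝ) (hM : 0 < M) (hM₀ : 0 < M₀) (hα : 0 < α)
    (K₀ : ℕ) (hK : 2 ≤ K₀) (hKeven : Even K₀) :
    ∃ C : ℝ, 0 < C ∧
      ∀ (p n τ : ℕ), 3 ≤ n → 1 ≤ τ → τ ≤ p →
      ∀ (S : Matrix (Fin p) (Fin p) ℝ), S.IsSymm →
        (∀ v : Fin p → ℝ, 0 ≤ ∑ i, ∑ j, v i * S i j * v j) →
        (∀ v : Fin p → ℝ, ∑ i, ∑ j, v i * S i j * v j ≤ M₀ * ∑ i, v i ^ 2) →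
        (∀ k : ℕ, 1 ≤ k → ∀ j : Fin p,
            ∑ i ∈ Finset.univ.filter
                (fun i : Fin p => k < ((i : ℤ) - (j : ℤ)).natAbs),
              |S i j| ≤ M * (k : ℝ) ^ (-α)) →
      ∀ (A : Matrix (Fin p) (Fin p) ℝ), (∀ i j, |A i j| ≤ 2) →
      ∀ (Ω : Type) (_ : MeasureSpace Ω)
        (_ : IsProbabilityMeasure (ℙ : Measure Ω))
        (Z₁ Z₂ : Ω → Fin p → ℝ), Measurable Z₁ → Measurable Z₂ →
        IsGaussianVec Z₁ S → IsGaussianVec Z₂ S → IndepFun Z₁ Z₂ ℙ →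
      (∫ ω, ((2 / (n : ℝ) ^ 2) * ∑ i : Fin p, ∑ j : Fin p,
            A i j * (Z₁ ω i * Z₁ ω j - S i j) * (Z₂ ω i * Z₂ ω j - S i j)) ^ K₀ ∂ℙ)
        ≤ C * (p : ℝ) ^ K₀ / (n : ℝ) ^ (2 * K₀) := by
  obtain ⟨m, rfl⟩ : ∃ m, K₀ = 2 * m := hKeven.exists_two_nsmul K₀ |>.imp fun m hm => by simpa using hm
  have hm : m ≠ 0 := by omega
  set c : ℝ := (gmom m ^ 2 * M₀ ^ (2 * m) * 4 ^ m) ^ 2 * 4 ^ m with hc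
  have hc0 : 0 ≤ c := by positivity
  refine ⟨2 ^ (2 * m) * c + 1, by positivity, ?_⟩
  intro p n τ hn _ _ S hsym hS hS' _ A hA Ω _ _ Z₁ Z₂ hZ₁ hZ₂ hG₁ hG₂ hind
  have hb := main_bound (hG₁.glaw hZ₁) (hG₂.glaw hZ₂) hsym hS hM₀ hS' A hA m hm
  rw [← hc, ← hind.map_prod_eq_prod_map_map hZ₁.aemeasurable hZ₂.aemeasurable,
    integral_map (by fun_prop) (by apply Measurable.aestronglyMeasurable; fun_prop)] at hb
  simp_rw [mul_pow]
  rw [integral_const_mul]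
  have hn0 : (0 : ℝ) < n := by exact_mod_cast (by omega : 0 < n)
  have hp : (0 : ℝ) ≤ (p : ℝ) ^ (2 * m) := by positivity
  calc (2 / (n : ℝ) ^ 2) ^ (2 * m) * _
      ≤ (2 / (n : ℝ) ^ 2) ^ (2 * m) * (c * (p : ℝ) ^ (2 * m)) :=
        mul_le_mul_of_nonneg_left hb (by positivity)
    _ = (2 ^ (2 * m) * c) * (p : ℝ) ^ (2 * m) / (n : ℝ) ^ (2 * (2 * m)) := by
        rw [div_pow, ← pow_mul]; ring
    _ ≤ _ := by
        gcongr
        linarith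
end
end

section
/- Let $Z \sim N_p(0, \Sigma)$ with $\Sigma \in \mathcal{F}_\alpha$, and let coefficients $\bar{A}^{(\tau)}_{ij}$ be bounded by 2 in absolute value. Define $Y = \frac{2(n-2)}{n^2}\sum_{1\le i,j\le p} \bar{A}^{(\tau)}_{ij}\sigma_{ij}(z_i z_j - \sigma_{ij})$. Then for any even $K_0 \ge 2$ there exists $C$ such that $\mathbb{E}[Y^{K_0}] \le C\, p^{K_0/2}/n^{K_0}$ for all $n \ge 3$ and $1 \le \tau \le p$. -/
open MeasureTheory ProbabilityTheory Finset

noncomputable section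

open Matrix in
lemma law_eq {Ω : Type} [MeasureSpace Ω] [IsProbabilityMeasure (ℙ : Measure Ω)] {p : ℕ}
    (Z : Ω → Fin p → ℝ) (S T : Matrix (Fin p) (Fin p) ℝ) (hZ : Measurable Z)
    (hG : IsGaussianVec Z S) (hT : T * Tᵀ = S) :
    Measure.map Z ℙ
      = (Measure.pi (fun _ : Fin p => gaussianReal 0 1)).map (fun g => T *ᵥ g) := by
  have hTm : Measurable (fun g : Fin p → ℝ => T *ᵥ g) := by fun_prop
  have := Measure.isProbabilityMeasure_map (μ := (ℙ : Measure Ω)) hZ.aemeasurable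
  have := Measure.isProbabilityMeasure_map
    (μ := Measure.pi (fun _ : Fin p => gaussianReal 0 1)) hTm.aemeasurable
  apply Measure.ext_of_charFunDual
  ext L
  set a : Fin p → ℝ := fun i => L (Pi.single i 1) with ha
  have hL : ∀ x : Fin p → ℝ, L x = ∑ i, a i * x i := by
    intro x
    conv_lhs => rw [← Finset.univ_sum_single x]
    rw [map_sum]
    refine Finset.sum_congr rfl fun i _ => ?_
    have : Pi.single i (x i) = x i • (Pi.single i 1 : Fin p → ℝ) := by
      rw [← Pi.single_smul]; simp
    rw [this, map_smul, smul_eq_mul, mul_comm]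
  have hv : ∑ i, ∑ j, a i * S i j * a j = ∑ k, (∑ i, a i * T i k) ^ 2 := by
    have h1 : ∑ i, ∑ j, a i * S i j * a j = a ⬝ᵥ (S *ᵥ a) := by
      simp only [dotProduct, mulVec, Finset.mul_sum, mul_assoc]
    have h2 : ∑ k, (∑ i, a i * T i k) ^ 2 = (a ᵥ* T) ⬝ᵥ (a ᵥ* T) := by
      simp only [dotProduct, vecMul, sq]
    rw [h1, h2, ← hT, ← mulVec_mulVec, dotProduct_mulVec, mulVec_transpose]
  rw [charFunDual_eq_charFun_map_one, Measure.map_map L.continuous.measurable hZ]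
  have e1 : (L ∘ Z) = fun ω => ∑ i, a i * Z ω i := by
    ext ω; exact hL _
  rw [e1, hG a, charFun_gaussianReal, hv, Real.coe_toNNReal _ (by positivity),
    charFunDual_apply, integral_map hTm.aemeasurable (by fun_prop)]
  have e2 : ∀ g : Fin p → ℝ, Complex.exp ((L (T *ᵥ g) : ℝ) * Complex.I)
      = ∏ k, Complex.exp (((∑ i, a i * T i k : ℝ) : ℂ) * (g k : ℝ) * Complex.I) := by
    intro g
    rw [← Complex.exp_sum, ← Finset.sum_mul]
    congr 2
    rw [hL]
    simp only [mulVec, dotProduct, Finset.mul_sum]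
    push_cast
    rw [Finset.sum_comm]
    simp only [Finset.sum_mul, mul_assoc]
  simp_rw [e2]
  rw [integral_fintype_prod_eq_prod (μ := fun _ : Fin p => gaussianReal 0 1) (fun k (x : ℝ) => Complex.exp (((∑ i, a i * T i k : ℝ) : ℂ) * (x : ℝ) * Complex.I))]
  simp_rw [← charFun_apply_real, charFun_gaussianReal]
  rw [← Complex.exp_sum]
  congr 1
  push_cast
  simp [Finset.sum_div]

lemma elem_ineq (u : ℝ) (hu : |u| ≤ 1 / 2) : 1 ≤ (1 - u) * Real.exp (u + u ^ 2) := by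
  obtain ⟨h1, h2⟩ := abs_le.mp hu
  rcases le_total 0 u with h | h
  · have := Real.quadratic_le_exp_of_nonneg (x := u + u ^ 2) (by positivity)
    have h3 : 1 ≤ (1 - u) * (1 + (u + u ^ 2) + (u + u ^ 2) ^ 2 / 2) := by
      have : (1 - u) * (1 + (u + u ^ 2) + (u + u ^ 2) ^ 2 / 2) - 1
        = u ^ 2 / 2 * (1 - u - u ^ 2 - u ^ 3) := by ring
      have : 0 ≤ u ^ 2 / 2 * (1 - u - u ^ 2 - u ^ 3) := by
        apply mul_nonneg (by positivity)
        have : u ^ 2 ≤ 1 / 4 := by nlinarith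
        have : u ^ 3 ≤ 1 / 8 := by nlinarith
        linarith
      linarith
    nlinarith
  · have := Real.add_one_le_exp (u + u ^ 2)
    have h3 : 1 ≤ (1 - u) * (u + u ^ 2 + 1) := by
      have : 0 ≤ (-u) ^ 3 := pow_nonneg (by linarith) 3
      nlinarith
    nlinarith

lemma gauss_mgf (s : ℝ) (hs : |s| ≤ 1 / 4) :
    Integrable (fun x => Real.exp (s * (x ^ 2 - 1))) (gaussianReal 0 1) ∧
    ∫ x, Real.exp (s * (x ^ 2 - 1)) ∂(gaussianReal 0 1) ≤ Real.exp (2 * s ^ 2) := by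
  obtain ⟨h1, h2⟩ := abs_le.mp hs
  have hb : 0 < 1 / 2 - s := by linarith
  have key : ∀ x : ℝ, gaussianPDFReal 0 1 x * Real.exp (s * (x ^ 2 - 1))
      = ((√(2 * Real.pi))⁻¹ * Real.exp (-s)) * Real.exp (-(1 / 2 - s) * x ^ 2) := by
    intro x
    rw [gaussianPDFReal_def]
    simp only [NNReal.coe_one, mul_one, sub_zero]
    rw [mul_assoc, mul_assoc, ← Real.exp_add, ← Real.exp_add]
    ring_nf
  constructor
  · rw [gaussianReal_of_var_ne_zero _ one_ne_zero,
      integrable_withDensity_iff_integrable_smul' (measurable_gaussianPDF 0 1)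
        (ae_of_all _ fun _ => gaussianPDF_lt_top)]
    simp only [toReal_gaussianPDF, smul_eq_mul, key]
    exact (integrable_exp_neg_mul_sq hb).const_mul _
  · rw [integral_gaussianReal_eq_integral_smul one_ne_zero]
    simp only [smul_eq_mul, key]
    rw [integral_const_mul, integral_gaussian]
    have h := elem_ineq (2 * s) (by rw [abs_mul, abs_two]; linarith)
    have e : (√(2 * Real.pi))⁻¹ * Real.exp (-s) * √(Real.pi / (1 / 2 - s))
        = √(1 / (1 - 2 * s)) * Real.exp (-s) := by
      rw [← Real.sqrt_inv, mul_right_comm, ← Real.sqrt_mul (by positivity)]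
      congr 2
      have := Real.pi_pos
      have h3 : 1 - 2 * s ≠ 0 := by linarith
      have h4 : 1 / 2 - s ≠ 0 := by linarith
      field_simp
    rw [e]
    have h5 : √(1 / (1 - 2 * s)) ≤ Real.exp (s + 2 * s ^ 2) := by
      rw [Real.sqrt_le_left (Real.exp_pos _).le, ← Real.exp_nat_mul,
        div_le_iff₀ (by linarith), mul_comm]
      have h6 : ((2 : ℕ) : ℝ) * (s + 2 * s ^ 2) = 2 * s + (2 * s) ^ 2 := by push_cast; ring
      rw [h6]
      exact h
    calc _ ≤ Real.exp (s + 2 * s ^ 2) * Real.exp (-s) := by gcongr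
      _ = _ := by rw [← Real.exp_add]; congr 1; ring

lemma pow_le_exp_add (x : ℝ) (K : ℕ) (hK : Even K) :
    x ^ K ≤ K.factorial * (Real.exp x + Real.exp (-x)) := by
  have hf : (0 : ℝ) < K.factorial := by positivity
  rw [← div_le_iff₀' hf]
  rcases le_total 0 x with h | h
  · have := Real.pow_div_factorial_le_exp x h K
    have := Real.exp_pos (-x)
    linarith
  · have := Real.pow_div_factorial_le_exp (-x) (by linarith) K
    rw [hK.neg_pow] at this
    have := Real.exp_pos x
    linarith

lemma chaos_mgf {p : ℕ} (l : Fin p → ℝ) (t : ℝ) (ht : t ^ 2 * ∑ k, l k ^ 2 ≤ 1 / 16) :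
    Integrable (fun g : Fin p → ℝ => Real.exp (t * ∑ k, l k * (g k ^ 2 - 1)))
      (Measure.pi (fun _ : Fin p => gaussianReal 0 1)) ∧
    ∫ g : Fin p → ℝ, Real.exp (t * ∑ k, l k * (g k ^ 2 - 1))
      ∂(Measure.pi (fun _ : Fin p => gaussianReal 0 1)) ≤ Real.exp 1 := by
  have hk : ∀ k, |t * l k| ≤ 1 / 4 := by
    intro k
    have : l k ^ 2 ≤ ∑ k, l k ^ 2 :=
      Finset.single_le_sum (f := fun k => l k ^ 2) (fun _ _ => sq_nonneg _) (Finset.mem_univ k)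
    apply abs_le_of_sq_le_sq _ (by norm_num)
    nlinarith [sq_nonneg t]
  have e : ∀ g : Fin p → ℝ, Real.exp (t * ∑ k, l k * (g k ^ 2 - 1))
      = ∏ k, Real.exp ((t * l k) * (g k ^ 2 - 1)) := by
    intro g
    rw [← Real.exp_sum, Finset.mul_sum]
    simp only [mul_assoc]
  simp_rw [e]
  constructor
  · exact Integrable.fintype_prod (μ := fun _ : Fin p => gaussianReal 0 1)
      (f := fun k (x : ℝ) => Real.exp ((t * l k) * (x ^ 2 - 1))) (fun k => (gauss_mgf _ (hk k)).1)
  · rw [integral_fintype_prod_eq_prod (μ := fun _ : Fin p => gaussianReal 0 1)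
      (fun k (x : ℝ) => Real.exp ((t * l k) * (x ^ 2 - 1)))]
    calc _ ≤ ∏ k, Real.exp (2 * (t * l k) ^ 2) := by
          apply Finset.prod_le_prod
          · intro k _; exact integral_nonneg fun _ => (Real.exp_pos _).le
          · intro k _; exact (gauss_mgf _ (hk k)).2
      _ = Real.exp (2 * (t ^ 2 * ∑ k, l k ^ 2)) := by
          rw [← Real.exp_sum]; simp only [Finset.mul_sum, mul_pow]
      _ ≤ _ := by apply Real.exp_le_exp.mpr; linarith

lemma chaos_moment {p : ℕ} (l : Fin p → ℝ) (L : ℝ) (hL : 0 < L) (hl : ∑ k, l k ^ 2 ≤ L ^ 2)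
    (K : ℕ) (hK : Even K) :
    ∫ g : Fin p → ℝ, (∑ k, l k * (g k ^ 2 - 1)) ^ K
      ∂(Measure.pi (fun _ : Fin p => gaussianReal 0 1))
      ≤ (4 * L) ^ K * (K.factorial * (2 * Real.exp 1)) := by
  set t := 1 / (4 * L) with htd
  have ht : t ^ 2 * ∑ k, l k ^ 2 ≤ 1 / 16 := by
    calc t ^ 2 * ∑ k, l k ^ 2 ≤ t ^ 2 * L ^ 2 := by gcongr
      _ = 1 / 16 := by rw [htd]; field_simp; norm_num
  obtain ⟨i1, b1⟩ := chaos_mgf l t ht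
  obtain ⟨i2, b2⟩ := chaos_mgf l (-t) (by rwa [neg_sq])
  have hpt : ∀ g : Fin p → ℝ, (∑ k, l k * (g k ^ 2 - 1)) ^ K ≤ (4 * L) ^ K * (K.factorial *
      (Real.exp (t * ∑ k, l k * (g k ^ 2 - 1)) + Real.exp (-t * ∑ k, l k * (g k ^ 2 - 1)))) := by
    intro g
    have := pow_le_exp_add (t * ∑ k, l k * (g k ^ 2 - 1)) K hK
    rw [← neg_mul] at this
    calc _ = (4 * L) ^ K * (t * ∑ k, l k * (g k ^ 2 - 1)) ^ K := by
          rw [← mul_pow, ← mul_assoc, htd, mul_one_div_cancel (by positivity), one_mul]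
      _ ≤ _ := by gcongr
  calc _ ≤ ∫ g : Fin p → ℝ, (4 * L) ^ K * (K.factorial *
      (Real.exp (t * ∑ k, l k * (g k ^ 2 - 1)) + Real.exp (-t * ∑ k, l k * (g k ^ 2 - 1))))
        ∂(Measure.pi (fun _ : Fin p => gaussianReal 0 1)) := by
        apply integral_mono_of_nonneg (ae_of_all _ fun g => hK.pow_nonneg _) _
          (ae_of_all _ hpt)
        exact ((i1.add i2).const_mul _).const_mul _
    _ = (4 * L) ^ K * (K.factorial * (_ + _)) := by
        rw [integral_const_mul, integral_const_mul, integral_add i1 i2]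
    _ ≤ _ := by
        gcongr
        linarith

open Matrix in
lemma spectral_real {p : ℕ} (G : Matrix (Fin p) (Fin p) ℝ) (hG : G.IsSymm) :
    ∃ (O : Matrix (Fin p) (Fin p) ℝ) (l : Fin p → ℝ), O * Oᵀ = 1 ∧ Oᵀ * O = 1 ∧
      Oᵀ * G * O = diagonal l := by
  have hH : G.IsHermitian := by
    rw [IsHermitian, conjTranspose_eq_transpose_of_trivial]; exact hG
  have h := hH.conjStarAlgAut_star_eigenvectorUnitary
  have hs : star (hH.eigenvectorUnitary : Matrix (Fin p) (Fin p) ℝ)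
      = (hH.eigenvectorUnitary : Matrix (Fin p) (Fin p) ℝ)ᵀ := by
    rw [star_eq_conjTranspose, conjTranspose_eq_transpose_of_trivial]
  refine ⟨hH.eigenvectorUnitary, hH.eigenvalues, ?_, ?_, ?_⟩
  · rw [← hs]; exact Unitary.coe_mul_star_self _
  · rw [← hs]; exact Unitary.coe_star_mul_self _
  · rw [Unitary.conjStarAlgAut_apply] at h
    rw [← hs]
    simpa using h

open Matrix in
lemma trace_conj_eq {p : ℕ} (S X : Matrix (Fin p) (Fin p) ℝ) :
    trace (Xᵀ * S * X) = ∑ k, ∑ i, ∑ j, X i k * S i j * X j k := by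
  simp only [trace, Matrix.diag, mul_apply, transpose_apply, Finset.sum_mul]
  refine Finset.sum_congr rfl fun k _ => ?_
  rw [Finset.sum_comm]

open Matrix in
lemma trace_self {p : ℕ} (X : Matrix (Fin p) (Fin p) ℝ) :
    trace (Xᵀ * X) = ∑ k, ∑ i, X i k ^ 2 := by
  simp only [trace, Matrix.diag, mul_apply, transpose_apply, sq]

open Matrix in
lemma matrix_part {p : ℕ} (M₀ : ℝ) (hM₀ : 0 < M₀) (S B : Matrix (Fin p) (Fin p) ℝ)
    (hS : S.IsSymm)
    (hpos : ∀ v : Fin p → ℝ, 0 ≤ ∑ i, ∑ j, v i * S i j * v j)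
    (hle : ∀ v : Fin p → ℝ, ∑ i, ∑ j, v i * S i j * v j ≤ M₀ * ∑ i, v i ^ 2)
    (hB : B.IsSymm) (hBS : ∀ i j, |B i j| ≤ 2 * |S i j|) :
    ∃ (T : Matrix (Fin p) (Fin p) ℝ) (l : Fin p → ℝ), T * Tᵀ = S ∧ Tᵀ * B * T = diagonal l ∧
      ∑ k, l k ^ 2 ≤ 4 * M₀ ^ 4 * p := by
  obtain ⟨O, d, hO1, hO2, hd⟩ := spectral_real S hS
  have hd0 : ∀ k, 0 ≤ d k := by
    intro k
    have h := congrFun (congrFun hd k) k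
    rw [diagonal_apply_eq] at h
    rw [← h]
    have h2 := hpos (fun i => O i k)
    simp only [mul_apply, transpose_apply, Finset.sum_mul]
    rwa [Finset.sum_comm] at h2
  set R := O * diagonal (fun k => √(d k)) with hR
  have hRR : R * Rᵀ = S := by
    have h1 : diagonal (fun k => √(d k)) * diagonal (fun k => √(d k)) = Oᵀ * S * O := by
      rw [hd, diagonal_mul_diagonal]
      congr 1; ext k; exact Real.mul_self_sqrt (hd0 k)
    calc R * Rᵀ = O * (diagonal (fun k => √(d k)) * diagonal (fun k => √(d k))) * Oᵀ := by
          rw [hR, transpose_mul, diagonal_transpose]; simp only [Matrix.mul_assoc]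
      _ = (O * Oᵀ) * S * (O * Oᵀ) := by rw [h1]; simp only [Matrix.mul_assoc]
      _ = S := by rw [hO1]; simp
  have hGs : (Rᵀ * B * R).IsSymm := by
    clear_value R
    rw [IsSymm, transpose_mul, transpose_mul, transpose_transpose, hB.eq, Matrix.mul_assoc]
  obtain ⟨U, l, hU1, hU2, hl⟩ := spectral_real _ hGs
  have hT : (R * U) * (R * U)ᵀ = S := by
    rw [transpose_mul, Matrix.mul_assoc, ← Matrix.mul_assoc U, hU1, Matrix.one_mul, hRR]
  have hTl : (R * U)ᵀ * B * (R * U) = diagonal l := by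
    rw [← hl, transpose_mul]; simp only [Matrix.mul_assoc]
  generalize R * U = T at hT hTl
  refine ⟨T, l, hT, hTl, ?_⟩
  -- the basic Frobenius contraction
  have F : ∀ X : Matrix (Fin p) (Fin p) ℝ,
      trace ((Tᵀ * X)ᵀ * (Tᵀ * X)) ≤ M₀ * trace (Xᵀ * X) := by
    intro X
    have : (Tᵀ * X)ᵀ * (Tᵀ * X) = Xᵀ * S * X := by
      rw [transpose_mul, transpose_transpose, ← hT]; simp only [Matrix.mul_assoc]
    rw [this, trace_conj_eq, trace_self, Finset.mul_sum]
    exact Finset.sum_le_sum fun k _ => hle _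
  have e0 : ∑ k, l k ^ 2 = trace ((Tᵀ * (B * T))ᵀ * (Tᵀ * (B * T))) := by
    rw [← Matrix.mul_assoc Tᵀ, hTl, diagonal_transpose, diagonal_mul_diagonal, trace_diagonal]
    simp only [sq]
  have e1 : trace ((B * T)ᵀ * (B * T)) = trace ((Tᵀ * B)ᵀ * (Tᵀ * B)) := by
    rw [trace_mul_comm, transpose_mul, transpose_mul, transpose_transpose, hB.eq]
  have e2 : trace (Bᵀ * B) ≤ 4 * trace (Sᵀ * S) := by
    rw [trace_self, trace_self]
    simp only [Finset.mul_sum]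
    refine Finset.sum_le_sum fun k _ => Finset.sum_le_sum fun i _ => ?_
    have := hBS i k
    rw [← sq_abs (B i k), ← sq_abs (S i k)]
    nlinarith [abs_nonneg (B i k)]
  have e3 : trace (Sᵀ * S) = trace ((Tᵀ * T)ᵀ * (Tᵀ * T)) := by
    rw [hS.eq, ← hT, transpose_mul, transpose_transpose, Matrix.mul_assoc, trace_mul_comm]
    simp only [Matrix.mul_assoc]
  have e4 : trace (Tᵀ * T) ≤ M₀ * p := by
    rw [trace_mul_comm, hT, trace]
    calc ∑ i, S.diag i ≤ ∑ i : Fin p, M₀ := by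
          refine Finset.sum_le_sum fun i _ => ?_
          have := hle (Pi.single i 1)
          simpa [Pi.single_apply, Finset.sum_ite_eq] using this
      _ = M₀ * p := by simp [mul_comm]
  have f1 := F (B * T)
  have f2 := F B
  have f3 := F T
  rw [e0]
  calc _ ≤ M₀ * trace ((B * T)ᵀ * (B * T)) := f1
    _ ≤ M₀ * (M₀ * (4 * (M₀ * (M₀ * p)))) := by
        rw [e1]
        gcongr
        refine f2.trans ?_
        gcongr
        refine e2.trans ?_
        gcongr
        rw [e3]
        refine f3.trans ?_
        gcongr
    _ = _ := by ring

open Matrix in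
lemma main_moment {p : ℕ} (M₀ : ℝ) (hM₀ : 0 < M₀) (hp : 1 ≤ p) (K : ℕ) (hK : Even K)
    (S A : Matrix (Fin p) (Fin p) ℝ)
    (hS : S.IsSymm)
    (hpos : ∀ v : Fin p → ℝ, 0 ≤ ∑ i, ∑ j, v i * S i j * v j)
    (hle : ∀ v : Fin p → ℝ, ∑ i, ∑ j, v i * S i j * v j ≤ M₀ * ∑ i, v i ^ 2)
    (hA : ∀ i j, |A i j| ≤ 2)
    {Ω : Type} [MeasureSpace Ω] [IsProbabilityMeasure (ℙ : Measure Ω)]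
    (Z : Ω → Fin p → ℝ) (hZ : Measurable Z) (hG : IsGaussianVec Z S) :
    ∫ ω, (∑ i : Fin p, ∑ j : Fin p, A i j * S i j * (Z ω i * Z ω j - S i j)) ^ K ∂ℙ
      ≤ (8 * M₀ ^ 2) ^ K * (K.factorial * (2 * Real.exp 1)) * (p : ℝ) ^ (K / 2) := by
  set B : Matrix (Fin p) (Fin p) ℝ := Matrix.of fun i j => (A i j + A j i) / 2 * S i j with hBd
  have hSs : ∀ i j, S j i = S i j := fun i j => hS.apply i j
  have hB : B.IsSymm := by
    ext i j
    simp only [hBd, transpose_apply, of_apply]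
    rw [hSs i j, add_comm]
  have hBS : ∀ i j, |B i j| ≤ 2 * |S i j| := by
    intro i j
    simp only [hBd, of_apply, abs_mul]
    gcongr
    rw [abs_div, abs_two]
    have := abs_add_le (A i j) (A j i)
    linarith [hA i j, hA j i]
  have hsum : ∀ z : Fin p → ℝ, ∑ i, ∑ j, A i j * S i j * (z i * z j - S i j)
      = ∑ i, ∑ j, B i j * (z i * z j - S i j) := by
    intro z
    have h1 : ∑ i, ∑ j, A i j * S i j * (z i * z j - S i j)
        = ∑ i, ∑ j, A j i * S i j * (z i * z j - S i j) := by
      rw [Finset.sum_comm]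
      refine Finset.sum_congr rfl fun i _ => Finset.sum_congr rfl fun j _ => ?_
      rw [hSs i j]; ring
    have h2 : ∑ i, ∑ j, B i j * (z i * z j - S i j)
        = (∑ i, ∑ j, A i j * S i j * (z i * z j - S i j)
          + ∑ i, ∑ j, A j i * S i j * (z i * z j - S i j)) / 2 := by
      rw [← Finset.sum_add_distrib, Finset.sum_div]
      refine Finset.sum_congr rfl fun i _ => ?_
      rw [← Finset.sum_add_distrib, Finset.sum_div]
      refine Finset.sum_congr rfl fun j _ => ?_
      simp only [hBd, of_apply]
      ring
    rw [h2, ← h1]; ring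
  obtain ⟨T, l, hT, hTl, hl⟩ := matrix_part M₀ hM₀ S B hS hpos hle hB hBS
  have htr : ∑ i, ∑ j, B i j * S i j = ∑ k, l k := by
    have h1 : trace (B * S) = ∑ i, ∑ j, B i j * S i j := by
      simp only [trace, Matrix.diag, mul_apply]
      exact Finset.sum_congr rfl fun i _ => Finset.sum_congr rfl fun j _ => by rw [hSs]
    rw [← h1, ← trace_diagonal l, ← hTl, ← hT, ← Matrix.mul_assoc, trace_mul_comm,
      Matrix.mul_assoc]
  have hquad : ∀ g : Fin p → ℝ, ∑ i, ∑ j, B i j * ((T *ᵥ g) i * (T *ᵥ g) j - S i j)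
      = ∑ k, l k * (g k ^ 2 - 1) := by
    intro g
    have h1 : ∑ i, ∑ j, B i j * ((T *ᵥ g) i * (T *ᵥ g) j) = ∑ k, l k * g k ^ 2 := by
      have h2 : ∑ i, ∑ j, B i j * ((T *ᵥ g) i * (T *ᵥ g) j) = (T *ᵥ g) ⬝ᵥ (B *ᵥ (T *ᵥ g)) := by
        rw [dotProduct]
        refine Finset.sum_congr rfl fun i _ => ?_
        have h4 : (B *ᵥ (T *ᵥ g)) i = ∑ j, B i j * (T *ᵥ g) j := rfl
        rw [h4, Finset.mul_sum]
        exact Finset.sum_congr rfl fun j _ => by ring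
      have h3 : (T *ᵥ g) ⬝ᵥ (B *ᵥ (T *ᵥ g)) = g ⬝ᵥ ((Tᵀ * B * T) *ᵥ g) := by
        rw [← mulVec_mulVec, ← mulVec_mulVec, dotProduct_mulVec g, vecMul_transpose]
      rw [h2, h3, hTl, dotProduct]
      refine Finset.sum_congr rfl fun k _ => ?_
      rw [mulVec_diagonal]; ring
    simp only [mul_sub, Finset.sum_sub_distrib, mul_one]
    rw [h1, htr]
  have hp0 : (0 : ℝ) < p := by exact_mod_cast hp
  have hTm : Measurable (fun g : Fin p → ℝ => T *ᵥ g) := by fun_prop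
  simp_rw [hsum]
  have hcm : Continuous (fun z : Fin p → ℝ => (∑ i, ∑ j, B i j * (z i * z j - S i j)) ^ K) := by
    fun_prop
  rw [← integral_map (φ := Z) hZ.aemeasurable
    (f := fun z : Fin p → ℝ => (∑ i, ∑ j, B i j * (z i * z j - S i j)) ^ K)
    hcm.aestronglyMeasurable,
    law_eq Z S T hZ hG hT, integral_map hTm.aemeasurable hcm.aestronglyMeasurable]
  simp_rw [hquad]
  have hL2 : (2 * M₀ ^ 2 * √p) ^ 2 = 4 * M₀ ^ 4 * p := by
    rw [mul_pow, Real.sq_sqrt hp0.le]; ring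
  refine (chaos_moment l (2 * M₀ ^ 2 * √p) (by positivity) (by rw [hL2]; exact hl) K hK).trans
    (le_of_eq ?_)
  have hsq : √(p : ℝ) ^ K = (p : ℝ) ^ (K / 2) := by
    conv_lhs => rw [← Nat.two_mul_div_two_of_even hK]
    rw [pow_mul, Real.sq_sqrt hp0.le]
  rw [show 4 * (2 * M₀ ^ 2 * √(p : ℝ)) = 8 * M₀ ^ 2 * √p by ring, mul_pow _ (√(p : ℝ)), hsq]
  ring

/-- For `Z ∼ N_p(0,Σ)` with `Σ ∈ 𝓕_α`, `|Ā_ij| ≤ 2`, and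
`Y = (2(n-2)/n²) ∑_{i,j} Ā_ij σ_ij (z_i z_j − σ_ij)`, for any even `K₀ ≥ 2`
there is `C` with `𝔼 Y^{K₀} ≤ C p^{K₀/2}/n^{K₀}` for `n ≥ 3`, `1 ≤ τ ≤ p`. -/
theorem stmt12 (M M₀ α : ℝ) (hM : 0 < M) (hM₀ : 0 < M₀) (hα : 0 < α)
    (K₀ : ℕ) (hK : 2 ≤ K₀) (hKeven : Even K₀) :
    ∃ C : ℝ, 0 < C ∧
      ∀ (p n τ : ℕ), 3 ≤ n → 1 ≤ τ → τ ≤ p →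
      ∀ (S : Matrix (Fin p) (Fin p) ℝ), S.IsSymm →
        (∀ v : Fin p → ℝ, 0 ≤ ∑ i, ∑ j, v i * S i j * v j) →
        (∀ v : Fin p → ℝ, ∑ i, ∑ j, v i * S i j * v j ≤ M₀ * ∑ i, v i ^ 2) →
        (∀ k : ℕ, 1 ≤ k → ∀ j : Fin p,
            ∑ i ∈ Finset.univ.filter
                (fun i : Fin p => k < ((i : ℤ) - (j : ℤ)).natAbs),
              |S i j| ≤ M * (k : ℝ) ^ (-α)) →
      ∀ (A : Matrix (Fin p) (Fin p) ℝ), (∀ i j, |A i j| ≤ 2) →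
      ∀ (Ω : Type) (_ : MeasureSpace Ω)
        (_ : IsProbabilityMeasure (ℙ : Measure Ω))
        (Z : Ω → Fin p → ℝ), Measurable Z → IsGaussianVec Z S →
      (∫ ω, ((2 * ((n : ℝ) - 2) / (n : ℝ) ^ 2) * ∑ i : Fin p, ∑ j : Fin p,
            A i j * S i j * (Z ω i * Z ω j - S i j)) ^ K₀ ∂ℙ)
        ≤ C * (p : ℝ) ^ (K₀ / 2) / (n : ℝ) ^ K₀ := by
  refine ⟨2 ^ K₀ * ((8 * M₀ ^ 2) ^ K₀ * (K₀.factorial * (2 * Real.exp 1))), by positivity, ?_⟩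
  intro p n τ hn hτ hτp S hS hpos hle _ A hA Ω _ _ Z hZ hG
  have h := main_moment M₀ hM₀ (hτ.trans hτp) K₀ hKeven S A hS hpos hle hA Z hZ hG
  have hn' : (3 : ℝ) ≤ n := by exact_mod_cast hn
  have hn0 : (0 : ℝ) < n := by linarith
  have hc0 : 0 ≤ 2 * ((n : ℝ) - 2) / (n : ℝ) ^ 2 := by
    apply div_nonneg _ (by positivity)
    linarith
  have hc : 2 * ((n : ℝ) - 2) / (n : ℝ) ^ 2 ≤ 2 / n := by
    rw [div_le_div_iff₀ (by positivity) hn0]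
    nlinarith
  simp_rw [mul_pow]
  rw [integral_const_mul]
  calc _ ≤ (2 / (n : ℝ)) ^ K₀ * ((8 * M₀ ^ 2) ^ K₀ * (K₀.factorial * (2 * Real.exp 1))
        * (p : ℝ) ^ (K₀ / 2)) := by
        apply mul_le_mul (pow_le_pow_left₀ hc0 hc _) h
          (integral_nonneg fun _ => hKeven.pow_nonneg _) (by positivity)
    _ = _ := by rw [div_pow, mul_pow]; ring
end
end
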